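/- Let N > 1 be an integer and let {m(r)} be a family of integers indexed by r = (r₁,r₂) ∈ (1/N)ℤ²∖ℤ², with m(r) = 0 for all but finitely many r. Suppose ∑_r m(r)(N r₁)² ≡ 0 and ∑_r m(r)(N r₂)² ≡ 0 modulo gcd(2,N)·N, that ∑_r m(r)(N r₁)(N r₂) ≡ 0 (mod N), and that ∑_r m(r)·gcd(12,N) ≡ 0 (mod 12). Then the function h(τ) = ζ ∏_r g_r(τ)^{m(r)}, with ζ = ∏_r e^{πi r₂(1−r₁) m(r)}, satisfies h(γτ) = h(τ) for all γ ∈ Γ(N) and τ ∈ ℍ, and its Fourier coefficients lie in the cyclotomic field ℚ(ζ_N). -/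

import Mathlib

open Complex UpperHalfPlane Matrix MatrixGroups CongruenceSubgroup
open scoped UpperHalfPlane Manifold Real

noncomputable section

/-- `N·τ` as a point of the upper half-plane (junk value `τ` if `N = 0`). -/
def hsmul (N : ℕ) (τ : UpperHalfPlane) : UpperHalfPlane :=
  if hN : 0 < N then
    ⟨(N : ℂ) * τ, by
      have h0 : (0 : ℝ) < (N : ℝ) := by exact_mod_cast hN
      simpa [Complex.mul_im] using mul_pos h0 τ.2⟩
  else τ

/-- The Siegel function `g_r(τ)` given by its infinite product expansion. -/
def siegel (r : ℚ × ℚ) (τ : ℍ) : ℂ :=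
  -Complex.exp ((Real.pi : ℂ) * Complex.I * (((r.1 : ℂ) ^ 2 - (r.1 : ℂ) + 1 / 6) * τ)) *
    Complex.exp ((Real.pi : ℂ) * Complex.I * (r.2 : ℂ) * ((r.1 : ℂ) - 1)) *
    (1 - Complex.exp (2 * (Real.pi : ℂ) * Complex.I * ((r.1 : ℂ) * τ + (r.2 : ℂ)))) *
    ∏' n : ℕ,
      ((1 - Complex.exp (2 * (Real.pi : ℂ) * Complex.I *
          (((n : ℂ) + 1 + (r.1 : ℂ)) * τ + (r.2 : ℂ)))) *
       (1 - Complex.exp (2 * (Real.pi : ℂ) * Complex.I *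
          (((n : ℂ) + 1 - (r.1 : ℂ)) * τ - (r.2 : ℂ)))))

/-- The lattice point `ω = m·τ + n` attached to a pair `(m,n) ∈ ℤ²`. -/
def lat (τ : ℍ) (p : ℤ × ℤ) : ℂ := (p.1 : ℂ) * τ + (p.2 : ℂ)

/-- `g₂(τ) = 60 ∑_{ω ∈ L_τ ∖ {0}} ω⁻⁴`. -/
def g2C (τ : ℍ) : ℂ := 60 * ∑' p : {p : ℤ × ℤ // p ≠ 0}, ((lat τ p.1) ^ 4)⁻¹

/-- `g₃(τ) = 140 ∑_{ω ∈ L_τ ∖ {0}} ω⁻⁶`. -/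
def g3C (τ : ℍ) : ℂ := 140 * ∑' p : {p : ℤ × ℤ // p ≠ 0}, ((lat τ p.1) ^ 6)⁻¹

/-- The discriminant `Δ(τ) = g₂(τ)³ - 27 g₃(τ)²`. -/
def discC (τ : ℍ) : ℂ := g2C τ ^ 3 - 27 * g3C τ ^ 2

/-- The Weierstrass `℘`-function relative to the lattice `L_τ = ℤτ + ℤ`. -/
def wpC (z : ℂ) (τ : ℍ) : ℂ :=
  (z ^ 2)⁻¹ + ∑' p : {p : ℤ × ℤ // p ≠ 0}, (((z - lat τ p.1) ^ 2)⁻¹ - ((lat τ p.1) ^ 2)⁻¹)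

/-- The Fricke function `f_r(τ)`. -/
def fricke (r : ℚ × ℚ) (τ : ℍ) : ℂ :=
  -(2 ^ 7 * 3 ^ 5) * (g2C τ * g3C τ / discC τ) * wpC ((r.1 : ℂ) * τ + (r.2 : ℂ)) τ

/-- The elliptic modular `j`-invariant. -/
def jinv (τ : ℍ) : ℂ := 1728 * g2C τ ^ 3 / discC τ

/-- The Dedekind eta function. -/
def etaC (τ : ℍ) : ℂ :=
  (Real.sqrt (2 * Real.pi) : ℂ) * Complex.exp (2 * (Real.pi : ℂ) * Complex.I / 16) *
    Complex.exp (2 * (Real.pi : ℂ) * Complex.I * τ / 24) *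
    ∏' n : ℕ, (1 - Complex.exp (2 * (Real.pi : ℂ) * Complex.I * ((n : ℂ) + 1) * τ))

/-- `r ∈ ℚ² ∖ ℤ²`. -/
def NonIntegral (r : ℚ × ℚ) : Prop := ¬ ∃ a b : ℤ, r = ((a : ℚ), (b : ℚ))

/-- `r ∈ (1/N)ℤ²`. -/
def InDen (N : ℕ) (r : ℚ × ℚ) : Prop := ∃ a b : ℤ, r = ((a : ℚ) / N, (b : ℚ) / N)

/-- Membership in `Γ^1(N)`: `a ≡ d ≡ 1` and `b ≡ 0 (mod N)`. -/
def GammaUpper (N : ℕ) (γ : SL(2, ℤ)) : Prop :=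
  ((γ 0 0 : ℤ) : ZMod N) = 1 ∧ ((γ 1 1 : ℤ) : ZMod N) = 1 ∧ ((γ 0 1 : ℤ) : ZMod N) = 0

/-- The transpose action `ᵗγ r = (a r₁ + c r₂, b r₁ + d r₂)` of `γ = [[a,b],[c,d]]`. -/
def tAct (γ : SL(2, ℤ)) (r : ℚ × ℚ) : ℚ × ℚ :=
  ((γ 0 0 : ℚ) * r.1 + (γ 1 0 : ℚ) * r.2, (γ 0 1 : ℚ) * r.1 + (γ 1 1 : ℚ) * r.2)

/-- The power `q^{n/d} = e^{2πi(n/d)τ}`. -/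
def qpow (d : ℕ) (n : ℤ) (τ : ℍ) : ℂ :=
  Complex.exp (2 * (Real.pi : ℂ) * Complex.I * ((n : ℂ) / (d : ℂ)) * τ)

/-- `h` is a weakly holomorphic modular function for `Γ₁(N)` with rational
Fourier coefficients: holomorphic on `ℍ`, `Γ₁(N)`-invariant, with a convergent
`q`-expansion at `i∞` having rational coefficients, and meromorphic at every cusp. -/
def IsWeaklyHolo1 (N : ℕ) (h : ℍ → ℂ) : Prop :=
  MDifferentiable 𝓘(ℂ) 𝓘(ℂ) h ∧
  (∀ γ ∈ Gamma1 N, ∀ τ : ℍ, h (γ • τ) = h τ) ∧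
  (∃ n₀ : ℤ, ∃ c : ℕ → ℚ,
    ∀ τ : ℍ, HasSum (fun n : ℕ => (c n : ℂ) * qpow 1 (n₀ + n) τ) (h τ)) ∧
  (∀ γ : SL(2, ℤ), ∃ n₀ : ℤ, ∃ c : ℕ → ℂ,
    ∀ τ : ℍ, HasSum (fun n : ℕ => c n * qpow N (n₀ + n) τ) (h (γ • τ)))

/-- `h` is a weakly holomorphic modular function for `Γ^1(N)` with rational
Fourier coefficients (the expansion at `i∞` being in powers of `q^{1/N}`). -/
def IsWeaklyHoloUp (N : ℕ) (h : ℍ → ℂ) : Prop :=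
  MDifferentiable 𝓘(ℂ) 𝓘(ℂ) h ∧
  (∀ γ : SL(2, ℤ), GammaUpper N γ → ∀ τ : ℍ, h (γ • τ) = h τ) ∧
  (∃ n₀ : ℤ, ∃ c : ℕ → ℚ,
    ∀ τ : ℍ, HasSum (fun n : ℕ => (c n : ℂ) * qpow N (n₀ + n) τ) (h τ)) ∧
  (∀ γ : SL(2, ℤ), ∃ n₀ : ℤ, ∃ c : ℕ → ℂ,
    ∀ τ : ℍ, HasSum (fun n : ℕ => c n * qpow N (n₀ + n) τ) (h (γ • τ)))

/-- The Weierstrass-unit generator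
`f^1_{m,N} = (f_{(1/N,0)} - f_{(1/m,0)})/(f_{(2/m,0)} - f_{(1/m,0)})`. -/
def fUnit (m N : ℕ) (τ : ℍ) : ℂ :=
  (fricke ((1 : ℚ) / N, 0) τ - fricke ((1 : ℚ) / m, 0) τ) /
    (fricke ((2 : ℚ) / m, 0) τ - fricke ((1 : ℚ) / m, 0) τ)

/-- The cocycle constant `ζ = ∏_r e^{πi r₂(1-r₁)m(r)}`. -/
def zetaFactor (m : ℚ × ℚ → ℤ) : ℂ :=
  ∏ᶠ r : ℚ × ℚ, Complex.exp ((Real.pi : ℂ) * Complex.I * (r.2 : ℂ) * (1 - (r.1 : ℂ)) * (m r : ℂ))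

/-- The product `ζ ∏_r g_r(τ)^{m(r)}`. -/
def siegelProd (m : ℚ × ℚ → ℤ) (τ : ℍ) : ℂ :=
  zetaFactor m * ∏ᶠ r : ℚ × ℚ, siegel r τ ^ m r


/-- The Euler type product. -/
def eulE (q u : ℂ) : ℂ := ∏' n : ℕ, (1 - q ^ (n + 1) * u)

lemma eulE_summable {q : ℂ} (hq : ‖q‖ < 1) (u : ℂ) :
    Summable (fun n : ℕ => ‖-(q ^ (n + 1) * u)‖) := by
  simp only [norm_neg, norm_mul, norm_pow]
  exact ((summable_nat_add_iff 1).mpr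
    (summable_geometric_of_lt_one (norm_nonneg _) hq)).mul_right _

lemma eulE_multipliable {q : ℂ} (hq : ‖q‖ < 1) (u : ℂ) :
    Multipliable (fun n : ℕ => (1 - q ^ (n + 1) * u)) := by
  simpa [sub_eq_add_neg] using multipliable_one_add_of_summable (eulE_summable hq u)

lemma eulE_ne_zero {q : ℂ} (hq : ‖q‖ < 1) {u : ℂ} (hu : ∀ n : ℕ, 1 - q ^ (n + 1) * u ≠ 0) :
    eulE q u ≠ 0 := by
  have := tprod_one_add_ne_zero_of_summable (f := fun n : ℕ => -(q ^ (n + 1) * u))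
    (by simpa [sub_eq_add_neg] using hu) (eulE_summable hq u)
  simpa [eulE, sub_eq_add_neg] using this

lemma eulE_step {q : ℂ} (hq : ‖q‖ < 1) (u : ℂ) :
    eulE q u = (1 - q * u) * eulE q (q * u) := by
  have h : ∀ n : ℕ, q ^ (n + 1) * (q * u) = q ^ (n + 1 + 1) * u := fun n => by ring
  unfold eulE
  rw [tprod_eq_zero_mul']
  · simp [h]
  · simpa [h] using eulE_multipliable hq (q * u)

lemma eulE_differentiable {q : ℂ} (hq : ‖q‖ < 1) : Differentiable ℂ (eulE q) := by
  rw [← differentiableOn_univ]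
  have hl : HasProdLocallyUniformlyOn (fun (n : ℕ) (u : ℂ) => 1 + -(q ^ (n + 1) * u))
      (fun u => ∏' n : ℕ, (1 + -(q ^ (n + 1) * u))) Set.univ := by
    apply hasProdLocallyUniformlyOn_of_forall_compact isOpen_univ
    intro K _ hcK
    obtain ⟨B, hB⟩ := hcK.isBounded.exists_norm_le
    refine (((summable_nat_add_iff 1).mpr
      (summable_geometric_of_lt_one (norm_nonneg _) hq)).mul_right B).hasProdUniformlyOn_nat_one_add
      hcK (.of_forall fun n x hx ↦ ?_) (fun _ ↦ by fun_prop)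
    simp only [norm_neg, norm_mul, norm_pow]
    gcongr
    exact hB x hx
  have := hl.differentiableOn (.of_forall fun _ ↦ by
    simpa [Finset.prod_fn] using DifferentiableOn.finsetProd (fun _ _ ↦ by fun_prop)) isOpen_univ
  simpa [sub_eq_add_neg, eulE] using! this

/-- `e(z) = exp (2πiz)`. -/
def ex (z : ℂ) : ℂ := Complex.exp (2 * (Real.pi : ℂ) * Complex.I * z)

lemma ex_add (a b : ℂ) : ex (a + b) = ex a * ex b := by
  simp only [ex, ← Complex.exp_add]; ring_nf

lemma ex_neg (a : ℂ) : ex (-a) = (ex a)⁻¹ := by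
  simp only [ex, ← Complex.exp_neg]; ring_nf

lemma ex_ne (a : ℂ) : ex a ≠ 0 := Complex.exp_ne_zero _

lemma ex_zero : ex 0 = 1 := by simp [ex]

lemma ex_eq_one_iff (a : ℂ) : ex a = 1 ↔ ∃ n : ℤ, a = n := by
  rw [ex, Complex.exp_eq_one_iff]
  have h : 2 * (Real.pi : ℂ) * Complex.I ≠ 0 := Complex.two_pi_I_ne_zero
  constructor
  · rintro ⟨n, hn⟩
    exact ⟨n, mul_left_cancel₀ h (by rw [hn]; ring)⟩
  · rintro ⟨n, rfl⟩
    exact ⟨n, by ring⟩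

lemma ex_int (n : ℤ) : ex n = 1 := (ex_eq_one_iff _).2 ⟨n, rfl⟩

lemma ex_half : ex (1 / 2) = -1 := by
  rw [ex, ← Complex.exp_pi_mul_I]; ring_nf

lemma ex_pow (a : ℂ) (n : ℕ) : ex a ^ n = ex (n * a) := by
  simp only [ex, ← Complex.exp_nat_mul]; ring_nf

lemma ex_zpow (a : ℂ) (n : ℤ) : ex a ^ n = ex (n * a) := by
  simp only [ex, ← Complex.exp_int_mul]; ring_nf

lemma ex_differentiable : Differentiable ℂ ex := by
  unfold ex; fun_prop

lemma norm_ex_lt {τ : ℂ} (h : 0 < τ.im) : ‖ex τ‖ < 1 := by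
  simpa [ex] using UpperHalfPlane.norm_exp_two_pi_I_lt_one ⟨τ, h⟩

/-- Theta type function with simple zeros on the lattice. -/
def phi (z τ : ℂ) : ℂ :=
  (ex (z / 2) - ex (-(z / 2))) * (eulE (ex τ) (ex z) * eulE (ex τ) (ex (-z)))

lemma phi_differentiable {τ : ℂ} (h : 0 < τ.im) : Differentiable ℂ (fun z => phi z τ) := by
  have := eulE_differentiable (norm_ex_lt h)
  have := ex_differentiable
  unfold phi
  fun_prop

lemma phi_zero (τ : ℂ) : phi 0 τ = 0 := by simp [phi, ex_zero]

lemma phi_add_one (z τ : ℂ) : phi (z + 1) τ = - phi z τ := by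
  have h1 : ex ((z + 1) / 2) = - ex (z / 2) := by
    rw [add_div, ex_add, ex_half]; ring
  have h2 : ex (-((z + 1) / 2)) = - ex (-(z / 2)) := by
    rw [ex_neg, h1, ex_neg]; rw [inv_neg]
  have h3 : ex (z + 1) = ex z := by
    rw [ex_add]; have := ex_int 1; simp at this; simp [this]
  rw [phi, h1, h2, ex_neg (z + 1), h3, phi, ex_neg z]; ring

lemma phi_add_tau (z : ℂ) {τ : ℂ} (h : 0 < τ.im) :
    phi (z + τ) τ = - ex (-(τ / 2) - z) * phi z τ := by
  have e1 := eulE_step (norm_ex_lt h) (ex z)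
  have e2 := eulE_step (norm_ex_lt h) (ex (-(z + τ)))
  rw [← ex_add, show τ + z = z + τ by ring] at e1
  rw [← ex_add, show τ + -(z + τ) = - z by ring] at e2
  rw [phi, phi, e1, e2]
  have a1 : ex ((z + τ) / 2) = ex (-((z+τ)/2)) * ex (z+τ) := by rw [← ex_add]; ring_nf
  have a2 : ex (-(τ / 2) - z) * ex (z/2) = ex (-((z+τ)/2)) := by rw [← ex_add]; ring_nf
  have a3 : ex (-(τ / 2) - z) * ex (-(z/2)) = ex (-((z+τ)/2)) * ex (-z) := by
    rw [← ex_add, ← ex_add]; ring_nf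
  linear_combination (eulE (ex τ) (ex (z + τ)) * ((1 - ex (-z)) * eulE (ex τ) (ex (-z)))) * a1
    + (1 - ex (z + τ)) * (eulE (ex τ) (ex (z + τ)) * eulE (ex τ) (ex (-z))) * (a2 - a3)

lemma phi_ne_zero {z τ : ℂ} (h : 0 < τ.im) (hz : ¬ ∃ a b : ℤ, z = a * τ + b) : phi z τ ≠ 0 := by
  have hq := norm_ex_lt h
  refine mul_ne_zero ?_ (mul_ne_zero (eulE_ne_zero hq fun n hn => ?_)
    (eulE_ne_zero hq fun n hn => ?_))
  · intro h0
    have : ex z = 1 := by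
      have h1 : ex (z/2) * ex (z/2) = ex z := by rw [← ex_add]; ring_nf
      have h2 : ex (z/2) * ex (-(z/2)) = 1 := by rw [← ex_add, ← ex_zero]; ring_nf
      linear_combination ex (z/2) * h0 + h2 - h1
    obtain ⟨n, hn⟩ := (ex_eq_one_iff _).1 this
    exact hz ⟨0, n, by simp [hn]⟩
  · rw [ex_pow, ← ex_add, sub_eq_zero, eq_comm, ex_eq_one_iff] at hn
    obtain ⟨k, hk⟩ := hn
    exact hz ⟨-(n+1), k, by push_cast at *; linear_combination hk⟩
  · rw [ex_pow, ← ex_add, sub_eq_zero, eq_comm, ex_eq_one_iff] at hn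
    obtain ⟨k, hk⟩ := hn
    exact hz ⟨(n+1), -k, by push_cast at *; linear_combination -hk⟩

lemma phi_deriv_zero {τ : ℂ} (h : 0 < τ.im) :
    deriv (fun z => phi z τ) 0 = 2 * π * Complex.I * eulE (ex τ) 1 ^ 2 := by
  have d := eulE_differentiable (norm_ex_lt h)
  have hex := ex_differentiable
  have h1 : HasDerivAt (fun z : ℂ => ex (z / 2) - ex (-(z / 2))) (2 * π * Complex.I) 0 := by
    have a : HasDerivAt (fun z : ℂ => ex (z / 2)) (π * Complex.I) 0 := by
      have := ((hasDerivAt_id (0:ℂ)).div_const 2).const_mul (2 * (Real.pi : ℂ) * Complex.I)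
      have := this.cexp
      convert! this using 1
      simp; ring
    have b : HasDerivAt (fun z : ℂ => ex (-(z / 2))) (-(π * Complex.I)) 0 := by
      have := ((hasDerivAt_id (0:ℂ)).div_const 2).neg.const_mul (2 * (Real.pi : ℂ) * Complex.I)
      have := this.cexp
      convert! this using 1
      simp; ring
    convert! a.sub b using 1
    ring
  have hd : DifferentiableAt ℂ (fun z => eulE (ex τ) (ex z) * eulE (ex τ) (ex (-z))) 0 := by
    fun_prop
  have := h1.mul hd.hasDerivAt
  have h3 := this.deriv
  have : (fun z => phi z τ) = (fun z : ℂ => ex (z / 2) - ex (-(z / 2))) *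
    (fun z => eulE (ex τ) (ex z) * eulE (ex τ) (ex (-z))) := rfl
  rw [this, h3]
  simp [ex_zero]; ring

lemma eulE_one_ne {τ : ℂ} (h : 0 < τ.im) : eulE (ex τ) 1 ≠ 0 := by
  refine eulE_ne_zero (norm_ex_lt h) fun n hn => ?_
  rw [ex_pow, mul_one, sub_eq_zero, eq_comm, ex_eq_one_iff] at hn
  obtain ⟨k, hk⟩ := hn
  have := congrArg Complex.im hk
  push_cast at this
  simp at this
  rcases this with h' | h'
  · have : (0:ℝ) < n + 1 := by positivity
    linarith
  · linarith

lemma ratio_const {τ : ℂ} (h : 0 < τ.im) {f g j : ℂ → ℂ} (hf : Differentiable ℂ f)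
    (hg : Differentiable ℂ g) (f1 : ∀ z, f (z + 1) = - f z) (g1 : ∀ z, g (z + 1) = - g z)
    (ft : ∀ z, f (z + τ) = j z * f z) (gt : ∀ z, g (z + τ) = j z * g z) (hj : ∀ z, j z ≠ 0)
    (hz : ∀ z, f z = 0 → ∃ a b : ℤ, z = a * τ + b) (f0 : f 0 = 0) (g0 : g 0 = 0)
    (fd : deriv f 0 ≠ 0) (z : ℂ) : g z * deriv f 0 = deriv g 0 * f z := by
  classical
  set c := deriv g 0 / deriv f 0 with hc
  let R : ℂ → ℂ := fun z => if f z = 0 then c else g z / f z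
  have p1 : Function.Periodic R 1 := by
    intro z
    simp only [R, f1, g1, neg_eq_zero, neg_div_neg_eq]
  have pt : Function.Periodic R τ := by
    intro z
    simp only [R, ft, gt, mul_eq_zero, hj, false_or]
    rw [mul_div_mul_left _ _ (hj z)]
  have pl : ∀ (a b : ℤ) (z : ℂ), R (z + (a * τ + b)) = R z := by
    intro a b z
    have e1 := pt.int_mul a z
    have e2 := p1.int_mul b (z + a * τ)
    rw [mul_one] at e2
    rw [← add_assoc, e2, e1]
  have hR0 : DifferentiableAt ℂ R 0 := by
    have hdf : Differentiable ℂ (dslope f 0) := by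
      rw [← differentiableOn_univ]
      exact (Complex.differentiableOn_dslope Filter.univ_mem).2 hf.differentiableOn
    have hdg : Differentiable ℂ (dslope g 0) := by
      rw [← differentiableOn_univ]
      exact (Complex.differentiableOn_dslope Filter.univ_mem).2 hg.differentiableOn
    have hne : dslope f 0 0 ≠ 0 := by rwa [dslope_same]
    have hq : DifferentiableAt ℂ (fun z => dslope g 0 z / dslope f 0 z) 0 :=
      hdg.differentiableAt.div hdf.differentiableAt hne
    refine hq.congr_of_eventuallyEq ?_
    have := hdf.continuous.continuousAt.eventually_ne hne
    filter_upwards [this] with w hw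
    by_cases hw0 : w = 0
    · subst hw0
      simp [R, f0, dslope_same, hc]
    · have ef : f w = w * dslope f 0 w := by
        have := sub_smul_dslope f 0 w
        simp [f0] at this; exact this.symm
      have eg : g w = w * dslope g 0 w := by
        have := sub_smul_dslope g 0 w
        simp [g0] at this; exact this.symm
      have : f w ≠ 0 := by rw [ef]; exact mul_ne_zero hw0 hw
      simp only [R, this, if_false]
      rw [ef, eg, mul_div_mul_left _ _ hw0]
  have hR : Differentiable ℂ R := by
    intro w
    by_cases hw : f w = 0
    · obtain ⟨a, b, hab⟩ := hz w hw
      have : R = R ∘ (fun z => z - w) := by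
        funext z
        have := pl a b (z - w)
        rw [← hab] at this
        simp [← this]
      rw [this]
      refine DifferentiableAt.comp w ?_ (by fun_prop)
      simpa using hR0
    · have : DifferentiableAt ℂ (fun z => g z / f z) w := (hg w).div (hf w) hw
      refine this.congr_of_eventuallyEq ?_
      filter_upwards [hf.continuous.continuousAt.eventually_ne hw] with v hv
      simp [R, hv]
  have hb : Bornology.IsBounded (Set.range R) := by
    have hK : IsCompact ((fun p : ℝ × ℝ => (p.1 : ℂ) * τ + p.2) ''
        (Set.Icc (0:ℝ) 1 ×ˢ Set.Icc (0:ℝ) 1)) :=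
      (isCompact_Icc.prod isCompact_Icc).image (by fun_prop)
    refine (hK.image hR.continuous).isBounded.subset ?_
    rintro _ ⟨w, rfl⟩
    set t := w.im / τ.im with ht
    set s := w.re - t * τ.re with hs
    have hw : w = t * τ + s := by
      apply Complex.ext
      · simp [hs]
      · simp [ht, h.ne']
    refine ⟨(Int.fract t : ℝ) * τ + (Int.fract s : ℝ), ⟨(Int.fract t, Int.fract s), ?_, rfl⟩, ?_⟩
    · exact ⟨⟨Int.fract_nonneg _, (Int.fract_lt_one _).le⟩,
        ⟨Int.fract_nonneg _, (Int.fract_lt_one _).le⟩⟩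
    · rw [← pl ⌊t⌋ ⌊s⌋]
      congr 1
      rw [hw]
      have e1 : (t : ℂ) = ((⌊t⌋ + Int.fract t : ℝ) : ℂ) := by rw [Int.floor_add_fract]
      have e2 : (s : ℂ) = ((⌊s⌋ + Int.fract s : ℝ) : ℂ) := by rw [Int.floor_add_fract]
      push_cast at e1 e2
      linear_combination -τ * e1 - e2
  have hconst := hR.apply_eq_apply_of_bounded hb z 0
  have hr0 : R 0 = c := by simp [R, f0]
  rw [hr0] at hconst
  by_cases hfz : f z = 0
  · have : g z = 0 := by
      obtain ⟨a, b, rfl⟩ := hz z hfz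
      have P1 : ∀ z, g (z + 1) = 0 ↔ g z = 0 := fun z => by rw [g1]; simp
      have Pt : ∀ z, g (z + τ) = 0 ↔ g z = 0 := fun z => by rw [gt]; simp [hj]
      have q1 : Function.Periodic (fun z => g z = 0) 1 := fun z => propext (P1 z)
      have qt : Function.Periodic (fun z => g z = 0) τ := fun z => propext (Pt z)
      have e1 := qt.int_mul a 0
      have e2 := q1.int_mul b (0 + a * τ)
      rw [mul_one] at e2
      have : (g (a * τ + b) = 0) = (g 0 = 0) := by
        simpa using e2.trans e1
      rw [this]; exact g0
    rw [hfz, this]; ring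
  · have : g z / f z = c := by simpa [R, hfz] using hconst
    rw [hc, div_eq_div_iff hfz fd] at this
    exact this

lemma eta_eq (τ : ℂ) : ModularForm.eta τ = ex (τ / 24) * eulE (ex τ) 1 := by
  unfold ModularForm.eta eulE
  congr 1
  · simp [Function.Periodic.qParam, ex]; ring_nf
  · refine tprod_congr fun n => ?_
    simp [ModularForm.eta_q, Function.Periodic.qParam, ex]

lemma eta_sq_S {τ : ℂ} (h : 0 < τ.im) :
    ModularForm.eta (-1 / τ) ^ 2 * Complex.I = τ * ModularForm.eta τ ^ 2 := by
  have hτ : τ ≠ 0 := by rintro rfl; simp at h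
  have := ModularForm.eta_comp_eq_csqrt_I_inv (show τ ∈ upperHalfPlaneSet from h)
  simp only [Function.comp, Pi.smul_apply, Pi.mul_apply, smul_eq_mul] at this
  have s1 : ∀ z : ℂ, z ≠ 0 → Complex.sqrt z ^ 2 = z := fun z hz => by
    rw [Complex.sqrt, ← Complex.cpow_nat_mul]; simp
  rw [this, mul_pow, mul_pow, s1 τ hτ, inv_pow, s1 _ Complex.I_ne_zero]
  field_simp

lemma phi_S (z : ℂ) {τ : ℂ} (h : 0 < τ.im) :
    ex ((-1 / τ) / 12) * phi (z / τ) (-1 / τ) =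
      -Complex.I * ex (z ^ 2 / (2 * τ)) * (ex (τ / 12) * phi z τ) := by
  have hτ : τ ≠ 0 := by rintro rfl; simp at h
  have h' : 0 < (-1 / τ).im := by
    have := UpperHalfPlane.im_inv_neg_coe_pos ⟨τ, h⟩
    simpa [neg_div, inv_neg] using this
  have hpd := phi_differentiable h'
  have hex := ex_differentiable
  have key := ratio_const h (f := fun z => phi z τ)
    (g := fun z => phi (z / τ) (-1 / τ) * ex (-(z ^ 2 / (2 * τ))))
    (j := fun z => - ex (-(τ / 2) - z))
    (phi_differentiable h)
    (by
      have : Differentiable ℂ (fun z : ℂ => phi (z / τ) (-1 / τ)) :=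
        hpd.comp (differentiable_id.div_const τ)
      have h2 : Differentiable ℂ (fun z : ℂ => ex (-(z ^ 2 / (2 * τ)))) :=
        hex.comp (by fun_prop)
      exact this.mul h2)
    (fun z => phi_add_one z τ)
    (fun z => by
      have e := phi_add_tau ((z + 1) / τ) h'
      have e2 : (z + 1) / τ + -1 / τ = z / τ := by ring
      rw [e2] at e
      rw [e]
      have e3 : ex (-((z + 1) ^ 2 / (2 * τ))) =
          ex (-(-1 / τ / 2) - (z + 1) / τ) * ex (-(z ^ 2 / (2 * τ))) := by
        rw [← ex_add]; congr 1; field_simp; ring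
      rw [e3]; ring)
    (fun z => phi_add_tau z h)
    (fun z => by
      have e2 : (z + τ) / τ = z / τ + 1 := by field_simp
      rw [e2, phi_add_one]
      have e3 : ex (-((z + τ) ^ 2 / (2 * τ))) =
          ex (-(τ / 2) - z) * ex (-(z ^ 2 / (2 * τ))) := by
        rw [← ex_add]; congr 1; field_simp; ring
      rw [e3]; ring)
    (fun z => neg_ne_zero.2 (ex_ne _))
    (fun z hz => by by_contra hcon; exact phi_ne_zero h hcon hz)
    (phi_zero τ) (by simp [phi_zero])
    (by
      rw [phi_deriv_zero h]
      exact mul_ne_zero Complex.two_pi_I_ne_zero (pow_ne_zero _ (eulE_one_ne h))) z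
  have dg : deriv (fun z => phi (z / τ) (-1 / τ) * ex (-(z ^ 2 / (2 * τ)))) 0 =
      2 * π * Complex.I * eulE (ex (-1 / τ)) 1 ^ 2 / τ := by
    have a : HasDerivAt (fun z => phi (z / τ) (-1 / τ))
        ((2 * π * Complex.I * eulE (ex (-1 / τ)) 1 ^ 2) * (1 / τ)) 0 := by
      have h0 : HasDerivAt (fun z => phi z (-1 / τ))
        (2 * π * Complex.I * eulE (ex (-1 / τ)) 1 ^ 2) (0 / τ) := by
        rw [zero_div, ← phi_deriv_zero h']
        exact hpd.differentiableAt.hasDerivAt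
      exact h0.comp (0:ℂ) ((hasDerivAt_id (0:ℂ)).div_const τ)
    have b : DifferentiableAt ℂ (fun z : ℂ => ex (-(z ^ 2 / (2 * τ)))) 0 :=
      (hex.comp (by fun_prop : Differentiable ℂ (fun z : ℂ => -(z ^ 2 / (2 * τ))))).differentiableAt
    have := (a.mul b.hasDerivAt).deriv
    refine Eq.trans this ?_
    simp [phi_zero, ex_zero]
    ring
  rw [dg, phi_deriv_zero h] at key
  have hs := eta_sq_S h
  rw [eta_eq, eta_eq, mul_pow, mul_pow, ex_pow, ex_pow] at hs
  have q1 : ((2:ℕ):ℂ) * (-1 / τ / 24) = (-1 / τ) / 12 := by push_cast; ring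
  have q2 : ((2:ℕ):ℂ) * (τ / 24) = τ / 12 := by push_cast; ring
  rw [q1, q2] at hs
  have hE := pow_ne_zero 2 (eulE_one_ne h)
  have ee : ex (-(z ^ 2 / (2 * τ))) * ex (z ^ 2 / (2 * τ)) = 1 := by
    rw [← ex_add, ← ex_zero]; ring_nf
  have k2 : phi (z / τ) (-1 / τ) * ex (-(z ^ 2 / (2 * τ))) * eulE (ex τ) 1 ^ 2 * τ =
      eulE (ex (-1 / τ)) 1 ^ 2 * phi z τ := by
    have := mul_left_cancel₀ Complex.two_pi_I_ne_zero
      (show 2 * π * Complex.I * (phi (z / τ) (-1 / τ) * ex (-(z ^ 2 / (2 * τ))) * eulE (ex τ) 1 ^ 2)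
        = 2 * π * Complex.I * (eulE (ex (-1 / τ)) 1 ^ 2 * phi z τ / τ) by
        linear_combination key)
    rw [this]; field_simp
  apply mul_left_cancel₀ (mul_ne_zero hE hτ)
  have hI : Complex.I * Complex.I = -1 := Complex.I_mul_I
  linear_combination ex (-1 / τ / 12) * ex (z ^ 2 / (2 * τ)) * k2
    - ex (-1 / τ / 12) * phi (z / τ) (-1 / τ) * eulE (ex τ) 1 ^ 2 * τ * ee
    - Complex.I * phi z τ * ex (z ^ 2 / (2 * τ)) * hs
    + ex (-1 / τ / 12) * ex (z ^ 2 / (2 * τ)) * eulE (ex (-1 / τ)) 1 ^ 2 * phi z τ * hI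

lemma ex_sub (a b : ℂ) : ex (a - b) * ex b = ex a := by rw [← ex_add]; congr 1; ring

lemma phi_add_int (z τ : ℂ) (l : ℤ) : phi (z + l) τ = ex (l / 2) * phi z τ := by
  induction l using Int.induction_on with
  | zero => simp [ex_zero]
  | succ n ih =>
    have e : ex (((n + 1 : ℤ) : ℂ) / 2) = - ex (((n : ℤ) : ℂ) / 2) := by
      push_cast; rw [add_div, ex_add, ex_half]; ring
    rw [e, Int.cast_add, Int.cast_one, ← add_assoc, phi_add_one, ih]; ring
  | pred n ih =>
    have e : ex (((-(n : ℤ) - 1 : ℤ) : ℂ) / 2) = - ex (((-(n : ℤ) : ℤ) : ℂ) / 2) := by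
      have := ex_sub (((-(n : ℤ) : ℤ) : ℂ) / 2) (1 / 2)
      rw [ex_half] at this
      rw [← this]; push_cast; ring_nf
    have e2 := phi_add_one (z + ((-(n : ℤ) - 1 : ℤ) : ℂ)) τ
    rw [show z + ((-(n : ℤ) - 1 : ℤ) : ℂ) + 1 = z + ((-(n : ℤ) : ℤ) : ℂ) by push_cast; ring, ih] at e2
    rw [e, neg_mul, e2, neg_neg]

lemma phi_add_int_tau (z : ℂ) {τ : ℂ} (h : 0 < τ.im) (k : ℤ) :
    phi (z + k * τ) τ = ex (k / 2 - k ^ 2 * τ / 2 - k * z) * phi z τ := by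
  have step : ∀ k : ℤ, ex (((k + 1 : ℤ) : ℂ) / 2 - ((k + 1 : ℤ) : ℂ) ^ 2 * τ / 2
      - ((k + 1 : ℤ) : ℂ) * z) = - ex (-(τ / 2) - (z + k * τ)) *
      ex (k / 2 - k ^ 2 * τ / 2 - k * z) := by
    intro k
    rw [neg_mul, ← ex_add, neg_eq_neg_one_mul, ← ex_half, ← ex_add]
    congr 1; push_cast; ring
  induction k using Int.induction_on with
  | zero => simp [ex_zero]
  | succ n ih =>
    have := phi_add_tau (z + ((n : ℤ) : ℂ) * τ) h
    rw [ih] at this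
    rw [step, mul_assoc, ← this]
    congr 1; push_cast; ring
  | pred n ih =>
    have := phi_add_tau (z + ((-(n : ℤ) - 1 : ℤ) : ℂ) * τ) h
    have s := step (-(n : ℤ) - 1)
    rw [show z + ((-(n : ℤ) - 1 : ℤ) : ℂ) * τ + τ = z + ((-(n : ℤ) : ℤ) : ℂ) * τ by push_cast; ring,
      ih] at this
    rw [sub_add_cancel] at s
    rw [s] at this
    apply mul_left_cancel₀ (neg_ne_zero.2 (ex_ne (-(τ / 2) - (z + ((-(n : ℤ) - 1 : ℤ) : ℂ) * τ))))
    rw [← this]; ring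

lemma siegel_eq (r : ℚ × ℚ) (τ : ℍ) :
    siegel r τ = ex (r.1 * (r.1 * τ + r.2) / 2) * ex (τ / 12) * phi (r.1 * τ + r.2) τ := by
  have hq := norm_ex_lt τ.2
  have hp : (∏' n : ℕ,
      ((1 - Complex.exp (2 * (Real.pi : ℂ) * Complex.I *
          (((n : ℂ) + 1 + (r.1 : ℂ)) * τ + (r.2 : ℂ)))) *
       (1 - Complex.exp (2 * (Real.pi : ℂ) * Complex.I *
          (((n : ℂ) + 1 - (r.1 : ℂ)) * τ - (r.2 : ℂ)))))) =
      eulE (ex τ) (ex (r.1 * τ + r.2)) * eulE (ex τ) (ex (-(r.1 * τ + r.2))) := by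
    unfold eulE
    rw [← (eulE_multipliable hq _).tprod_mul (eulE_multipliable hq _)]
    refine tprod_congr fun n => ?_
    rw [ex_pow, ← ex_add, ← ex_add]
    unfold ex
    push_cast
    ring_nf
  unfold siegel
  rw [hp, phi]
  set z : ℂ := r.1 * τ + r.2 with hz
  have e1 : Complex.exp ((Real.pi : ℂ) * Complex.I * (((r.1 : ℂ) ^ 2 - (r.1 : ℂ) + 1 / 6) * τ)) *
    Complex.exp ((Real.pi : ℂ) * Complex.I * (r.2 : ℂ) * ((r.1 : ℂ) - 1)) =
    ex (r.1 * z / 2) * ex (τ / 12) * ex (-(z / 2)) := by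
    rw [← Complex.exp_add, ← ex_add, ← ex_add, ex, hz]; congr 1; ring
  have e2 : Complex.exp (2 * (Real.pi : ℂ) * Complex.I * z) = ex z := rfl
  have e3 : ex (-(z / 2)) * ex z = ex (z / 2) := by rw [← ex_add]; congr 1; ring
  rw [e2]
  linear_combination (-(1 - ex z) * (eulE (ex τ) (ex z) * eulE (ex τ) (ex (-z)))) * e1 +
    ex (r.1 * z / 2) * ex (τ / 12) * (eulE (ex τ) (ex z) * eulE (ex τ) (ex (-z))) * e3

lemma siegel_shift (r : ℚ × ℚ) (k l : ℤ) (τ : ℍ) :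
    siegel (r.1 + k, r.2 + l) τ =
      ex ((k * l + k + l - k * r.2 + l * r.1) / 2) * siegel r τ := by
  rw [siegel_eq, siegel_eq]
  have h1 : ((r.1 + k : ℚ) : ℂ) * τ + ((r.2 + l : ℚ) : ℂ) = (r.1 * τ + r.2) + l + k * τ := by
    push_cast; ring
  simp only
  rw [h1, phi_add_int_tau _ τ.2, phi_add_int]
  set z : ℂ := r.1 * τ + r.2 with hz
  have : ex (((r.1 + k : ℚ) : ℂ) * (z + l + k * τ) / 2) * 
    (ex (k / 2 - k ^ 2 * τ / 2 - k * (z + l)) * ex (l / 2)) = 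
      ex ((k * l + k + l - k * r.2 + l * r.1) / 2) * ex (r.1 * z / 2) := by
    rw [← ex_add, ← ex_add, ← ex_add]
    have : ex (-((k * l : ℤ) : ℂ)) = 1 := by rw [ex_neg, ex_int]; simp
    rw [← one_mul (ex ((k * l + k + l - k * r.2 + l * r.1) / 2 + r.1 * z / 2)), ← this, ← ex_add]
    congr 1; push_cast; rw [hz]; ring
  linear_combination ex (τ / 12) * phi z τ * this

lemma siegel_T (r : ℚ × ℚ) (τ : ℍ) :
    siegel r (ModularGroup.T • τ) = ex (((1 : ℤ) : ℂ) / 12) * siegel (tAct ModularGroup.T r) τ := by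
  rw [siegel_eq, siegel_eq, UpperHalfPlane.modular_T_smul]
  have h0 : (((1 : ℝ) +ᵥ τ : ℍ) : ℂ) = τ + 1 := by
    rw [UpperHalfPlane.coe_vadd]; push_cast; ring
  have h1 : (((tAct ModularGroup.T r).1 : ℚ) : ℂ) = r.1 := by simp [tAct, ModularGroup.T]
  have h2 : (((tAct ModularGroup.T r).2 : ℚ) : ℂ) = r.1 + r.2 := by simp [tAct, ModularGroup.T]
  rw [h0, h1, h2]
  have h3 : (r.1 : ℂ) * (τ + 1) + r.2 = r.1 * τ + (r.1 + r.2) := by ring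
  have h4 : ex ((τ : ℂ) + 1) = ex τ := by
    rw [ex_add]; have := ex_int 1; simp at this; simp [this]
  rw [h3, phi, phi, h4, add_div, ex_add]
  push_cast; ring

lemma ex_neg_quarter : ex (((-3 : ℤ) : ℂ) / 12) = - Complex.I := by
  have : (-Complex.I) = Complex.exp (-(π / 2 * Complex.I)) := by
    rw [Complex.exp_neg, Complex.exp_pi_div_two_mul_I, Complex.inv_I]
  rw [this, ex]; congr 1; push_cast; ring

lemma siegel_S (r : ℚ × ℚ) (τ : ℍ) :
    siegel r (ModularGroup.S • τ) = ex (((-3 : ℤ) : ℂ) / 12) * siegel (tAct ModularGroup.S r) τ := by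
  rw [siegel_eq, siegel_eq, UpperHalfPlane.modular_S_smul]
  have hτ := τ.ne_zero
  have h0 : ((UpperHalfPlane.mk (-(τ : ℂ))⁻¹ τ.im_inv_neg_coe_pos : ℍ) : ℂ) = -1 / τ := by
    simp [neg_div, inv_neg]
  have h1 : (((tAct ModularGroup.S r).1 : ℚ) : ℂ) = r.2 := by simp [tAct, ModularGroup.S]
  have h2 : (((tAct ModularGroup.S r).2 : ℚ) : ℂ) = -r.1 := by simp [tAct, ModularGroup.S]
  rw [h0, h1, h2, ex_neg_quarter]
  have h3 : (r.1 : ℂ) * (-1 / τ) + r.2 = (r.2 * τ + -r.1) / τ := by field_simp; ring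
  have key := phi_S (r.2 * τ + -r.1) τ.2
  rw [h3]
  set z : ℂ := r.2 * τ + -r.1 with hz
  have e : ex (r.1 * (z / τ) / 2) * ex (z ^ 2 / (2 * τ)) = ex (r.2 * z / 2) := by
    rw [← ex_add]; congr 1; rw [hz]; field_simp; ring
  linear_combination ex (r.1 * (z / τ) / 2) * key - Complex.I * (ex (τ / 12) * phi z τ) * e

lemma SL_mul_apply (γ δ : SL(2, ℤ)) (i j : Fin 2) :
    (γ * δ) i j = γ i 0 * δ 0 j + γ i 1 * δ 1 j := by
  rw [Matrix.SpecialLinearGroup.coe_mul, Matrix.mul_apply, Fin.sum_univ_two]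

lemma tAct_mul (γ δ : SL(2, ℤ)) (r : ℚ × ℚ) : tAct (γ * δ) r = tAct δ (tAct γ r) := by
  simp only [tAct, SL_mul_apply]
  ext <;> (push_cast; ring)

lemma tAct_one (r : ℚ × ℚ) : tAct 1 r = r := by
  simp [tAct]

/-- Exponent of the multiplier system of `η²`. -/
def psiP {R : Type*} [CommRing R] (a b c d : R) : R :=
  (1 - c ^ 2) * (b * d + 3 * (c - 1) * d + c + 3) + c * (a + d - 3)

/-- Exponent of the multiplier system of `η²`. -/
def psiZ (γ : SL(2, ℤ)) : ℤ := psiP (γ 0 0) (γ 0 1) (γ 1 0) (γ 1 1)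

lemma psiP_cast {R : Type*} [CommRing R] (a b c d : ℤ) :
    ((psiP a b c d : ℤ) : R) = psiP (a : R) b c d := by
  simp [psiP]

lemma psiP_three : ∀ a b c d : ZMod 3, a * d - b * c = 1 →
    psiP (a + c) (b + d) c d = psiP a b c d + 1 ∧ psiP (-c) (-d) a b = psiP a b c d - 3 := by
  unfold psiP; decide

lemma psiP_four : ∀ a b c d : ZMod 4, a * d - b * c = 1 →
    psiP (a + c) (b + d) c d = psiP a b c d + 1 ∧ psiP (-c) (-d) a b = psiP a b c d - 3 := by
  unfold psiP; decide

lemma psiP_twelve (a b c d : ℤ) (h : a * d - b * c = 1) :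
    (12 : ℤ) ∣ psiP (a + c) (b + d) c d - (psiP a b c d + 1) ∧
    (12 : ℤ) ∣ psiP (-c) (-d) a b - (psiP a b c d - 3) := by
  have h3 := psiP_three a b c d (by exact_mod_cast congrArg (Int.cast : ℤ → ZMod 3) h)
  have h4 := psiP_four a b c d (by exact_mod_cast congrArg (Int.cast : ℤ → ZMod 4) h)
  have m : ∀ x : ℤ, (x : ZMod 3) = 0 → (x : ZMod 4) = 0 → (12 : ℤ) ∣ x := by
    intro x h3 h4
    rw [ZMod.intCast_zmod_eq_zero_iff_dvd] at h3 h4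
    push_cast at h3 h4
    omega
  constructor
  · apply m <;> rw [Int.cast_sub, Int.cast_add, psiP_cast, psiP_cast, sub_eq_zero] <;> push_cast
    · exact h3.1
    · exact h4.1
  · apply m <;> rw [Int.cast_sub, Int.cast_sub, psiP_cast, psiP_cast, sub_eq_zero] <;> push_cast
    · exact h3.2
    · exact h4.2

lemma ex_twelve {k l : ℤ} (h : (12 : ℤ) ∣ k - l) : ex ((k : ℂ) / 12) = ex ((l : ℂ) / 12) := by
  obtain ⟨c, hc⟩ := h
  have : (k : ℂ) / 12 = c + l / 12 := by
    have : (k : ℂ) = 12 * c + l := by exact_mod_cast (by omega : k = 12 * c + l)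
    rw [this]; ring
  rw [this, ex_add, ex_int, one_mul]

lemma SL_det (γ : SL(2, ℤ)) : γ 0 0 * γ 1 1 - γ 0 1 * γ 1 0 = 1 := by
  have := γ.det_coe
  rwa [Matrix.det_fin_two] at this

lemma psi_T (γ : SL(2, ℤ)) : (12 : ℤ) ∣ psiZ (ModularGroup.T * γ) - (psiZ γ + 1) := by
  have := (psiP_twelve _ _ _ _ (SL_det γ)).1
  have e : psiZ (ModularGroup.T * γ) =
      psiP (γ 0 0 + γ 1 0) (γ 0 1 + γ 1 1) (γ 1 0) (γ 1 1) := by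
    simp only [psiZ, SL_mul_apply]
    simp [ModularGroup.T]
  rw [e]; exact this

lemma psi_S (γ : SL(2, ℤ)) : (12 : ℤ) ∣ psiZ (ModularGroup.S * γ) - (psiZ γ - 3) := by
  have := (psiP_twelve _ _ _ _ (SL_det γ)).2
  have e : psiZ (ModularGroup.S * γ) =
      psiP (-γ 1 0) (-γ 1 1) (γ 0 0) (γ 0 1) := by
    simp only [psiZ, SL_mul_apply]
    simp [ModularGroup.S]
  rw [e]; exact this

lemma siegel_gen_inv (g : SL(2, ℤ)) (k : ℤ)
    (hg : ∀ r τ, siegel r (g • τ) = ex ((k : ℂ) / 12) * siegel (tAct g r) τ) (r : ℚ × ℚ) (τ : ℍ) :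
    siegel r (g⁻¹ • τ) = ex (((-k : ℤ) : ℂ) / 12) * siegel (tAct g⁻¹ r) τ := by
  have := hg (tAct g⁻¹ r) (g⁻¹ • τ)
  rw [smul_inv_smul, ← tAct_mul, inv_mul_cancel, tAct_one] at this
  rw [this, ← mul_assoc, ← ex_add]
  have : (((-k : ℤ) : ℂ) / 12 + k / 12) = 0 := by push_cast; ring
  rw [this, ex_zero, one_mul]

lemma siegel_mul (g h : SL(2, ℤ)) (k l n : ℤ)
    (hg : ∀ r τ, siegel r (g • τ) = ex ((k : ℂ) / 12) * siegel (tAct g r) τ)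
    (hh : ∀ r τ, siegel r (h • τ) = ex ((l : ℂ) / 12) * siegel (tAct h r) τ)
    (hn : (12 : ℤ) ∣ n - (l + k)) (r : ℚ × ℚ) (τ : ℍ) :
    siegel r ((g * h) • τ) = ex ((n : ℂ) / 12) * siegel (tAct (g * h) r) τ := by
  rw [mul_smul, hg, hh, tAct_mul, ← mul_assoc, ← ex_add, ex_twelve hn]
  congr 2; push_cast; ring

lemma siegel_SL (γ : SL(2, ℤ)) : ∀ (r : ℚ × ℚ) (τ : ℍ),
    siegel r (γ • τ) = ex ((psiZ γ : ℂ) / 12) * siegel (tAct γ r) τ := by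
  have hγ : γ ∈ Subgroup.closure {ModularGroup.S, ModularGroup.T} := by
    simp [SpecialLinearGroup.SL2Z_generators]
  induction hγ using Subgroup.closure_induction_left with
  | one =>
    intro r τ
    have : psiZ 1 = 0 := by simp [psiZ, psiP]
    simp [this, ex_zero, tAct_one]
  | mul_left x hx y hy ih =>
    rcases hx with rfl | hx
    · exact siegel_mul _ _ _ _ _ siegel_S ih (psi_S y)
    · rw [Set.mem_singleton_iff] at hx; subst hx
      exact siegel_mul _ _ _ _ _ siegel_T ih (psi_T y)
  | inv_mul_cancel x hx y hy ih =>
    rcases hx with rfl | hx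
    · refine siegel_mul _ _ _ _ _ (siegel_gen_inv _ _ siegel_S) ih ?_
      have := psi_S (ModularGroup.S⁻¹ * y)
      rw [mul_inv_cancel_left] at this
      omega
    · rw [Set.mem_singleton_iff] at hx; subst hx
      refine siegel_mul _ _ _ _ _ (siegel_gen_inv _ _ siegel_T) ih ?_
      have := psi_T (ModularGroup.T⁻¹ * y)
      rw [mul_inv_cancel_left] at this
      omega

lemma parity_decide : ∀ a b c d k1 k2 k3 N : ZMod 2, a + d + N * (a * d - b * c) = 0 →
    a * b * (k1 * N) + (a * d + b * c) * (k3 * N) + c * d * (k2 * N) + (a + b) * (k1 * N)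
      + (c + d) * (k2 * N) - (a - d) * k3 - c * (k2 * N) + b * (k1 * N) = 0 := by
  decide

lemma gcd_two_cast (N : ℕ) : ((Nat.gcd 2 N : ℕ) : ZMod 2) = (N : ZMod 2) := by
  rcases Nat.even_or_odd N with h | h
  · have : Nat.gcd 2 N = 2 := Nat.gcd_eq_left h.two_dvd
    rw [this, (ZMod.natCast_eq_zero_iff_even).2 h]; rfl
  · have : Nat.gcd 2 N = 1 := by
      exact (Nat.coprime_two_left).2 h
    rw [this, (ZMod.natCast_eq_one_iff_odd).2 h]; rfl

lemma gcd_mul_self (N : ℕ) : ((Nat.gcd 2 N : ℕ) : ZMod 2) * (N : ZMod 2) = (N : ZMod 2) := by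
  rw [gcd_two_cast]
  generalize (N : ZMod 2) = x
  revert x; decide

lemma even_sq_sub (x : ℤ) : (2 : ℤ) ∣ x ^ 2 - x := by
  have := Int.even_mul_pred_self x
  rw [show x ^ 2 - x = x * (x - 1) by ring]
  exact this.two_dvd

lemma parity_int (N : ℕ) (a b c d k1 k2 k3 S1 S2 : ℤ)
    (hd : a + d + N * (a * d - b * c) = 0)
    (h1 : (2 : ℤ) ∣ k1 * (Nat.gcd 2 N * N) - S1) (h2 : (2 : ℤ) ∣ k2 * (Nat.gcd 2 N * N) - S2) :
    (2 : ℤ) ∣ a * b * (k1 * (Nat.gcd 2 N * N)) + (a * d + b * c) * (k3 * N)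
      + c * d * (k2 * (Nat.gcd 2 N * N)) + (a + b) * S1
      + (c + d) * S2 - (a - d) * k3 - c * (k2 * Nat.gcd 2 N) + b * (k1 * Nat.gcd 2 N) := by
  have t := fun x : ℤ => ZMod.intCast_zmod_eq_zero_iff_dvd x 2
  push_cast at t
  rw [← t] at h1 h2 ⊢
  push_cast [gcd_mul_self] at h1 h2 ⊢
  have hd' := congrArg (Int.cast : ℤ → ZMod 2) hd
  push_cast at hd'
  rw [sub_eq_zero] at h1 h2
  rw [← h1, ← h2, gcd_two_cast]
  exact parity_decide _ _ _ _ _ _ _ _ hd'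

lemma sum_exponent {ι : Type*} (S : Finset ι) (m s1 s2 : ι → ℤ) (N : ℕ)
    (a b c d k1 k2 k3 : ℤ)
    (hd : a + d + N * (a * d - b * c) = 0)
    (h1 : ∑ r ∈ S, m r * s1 r ^ 2 = k1 * (Nat.gcd 2 N * N))
    (h2 : ∑ r ∈ S, m r * s2 r ^ 2 = k2 * (Nat.gcd 2 N * N))
    (h3 : ∑ r ∈ S, m r * s1 r * s2 r = k3 * N) :
    ∃ t : ℤ, ∑ r ∈ S, m r * (N * ((a * s1 r + c * s2 r) * (b * s1 r + d * s2 r)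
      + (a * s1 r + c * s2 r) + (b * s1 r + d * s2 r))
      - (a * s1 r + c * s2 r) * s2 r + (b * s1 r + d * s2 r) * s1 r) = 2 * N * t := by
  have p1 : (2 : ℤ) ∣ k1 * (Nat.gcd 2 N * N) - ∑ r ∈ S, m r * s1 r := by
    rw [← h1, ← Finset.sum_sub_distrib]
    refine Finset.dvd_sum fun r _ => ?_
    rw [← mul_sub]; exact Dvd.dvd.mul_left (even_sq_sub _) _
  have p2 : (2 : ℤ) ∣ k2 * (Nat.gcd 2 N * N) - ∑ r ∈ S, m r * s2 r := by
    rw [← h2, ← Finset.sum_sub_distrib]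
    refine Finset.dvd_sum fun r _ => ?_
    rw [← mul_sub]; exact Dvd.dvd.mul_left (even_sq_sub _) _
  obtain ⟨t, ht⟩ := parity_int N a b c d k1 k2 k3 _ _ hd p1 p2
  refine ⟨t, ?_⟩
  have : ∑ r ∈ S, m r * (N * ((a * s1 r + c * s2 r) * (b * s1 r + d * s2 r)
      + (a * s1 r + c * s2 r) + (b * s1 r + d * s2 r))
      - (a * s1 r + c * s2 r) * s2 r + (b * s1 r + d * s2 r) * s1 r) =
      (N * a * b + b) * ∑ r ∈ S, m r * s1 r ^ 2 + (N * c * d - c) * ∑ r ∈ S, m r * s2 r ^ 2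
      + (N * (a * d + b * c) - a + d) * ∑ r ∈ S, m r * s1 r * s2 r
      + N * (a + b) * ∑ r ∈ S, m r * s1 r + N * (c + d) * ∑ r ∈ S, m r * s2 r := by
    simp only [Finset.mul_sum, ← Finset.sum_add_distrib]
    refine Finset.sum_congr rfl fun r _ => ?_
    ring
  rw [this, h1, h2, h3]
  linear_combination (N : ℤ) * ht

lemma psi_dvd (N : ℕ) (γ : SL(2, ℤ)) (hγ : γ ∈ CongruenceSubgroup.Gamma N) (M : ℤ)
    (h4 : (12 : ℤ) ∣ M * (Nat.gcd 12 N : ℤ)) : (12 : ℤ) ∣ M * psiZ γ := by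
  have h : ((N : ℕ) : ℤ) ∣ psiZ γ := by
    rw [← ZMod.intCast_zmod_eq_zero_iff_dvd, psiZ, psiP_cast]
    rw [CongruenceSubgroup.Gamma_mem] at hγ
    obtain ⟨h1, h2, h3, h4⟩ := hγ
    rw [h1, h2, h3, h4]
    simp [psiP]
  have : ((Nat.gcd 12 N : ℕ) : ℤ) ∣ psiZ γ :=
    (Int.natCast_dvd_natCast.2 (Nat.gcd_dvd_right 12 N)).trans h
  exact h4.trans (mul_dvd_mul_left M this)

/-- Integer data extracted from the hypotheses. -/
lemma int_data (N : ℕ) (hN : 1 < N) (m : ℚ × ℚ → ℤ)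
    (hmem : ∀ r : ℚ × ℚ, m r ≠ 0 → InDen N r ∧ NonIntegral r)
    (hfin : (Function.support m).Finite)
    (h1 : ∃ k : ℤ, ∑ᶠ r : ℚ × ℚ, (m r : ℚ) * ((N : ℚ) * r.1) ^ 2
            = (k : ℚ) * ((Nat.gcd 2 N : ℚ) * N))
    (h2 : ∃ k : ℤ, ∑ᶠ r : ℚ × ℚ, (m r : ℚ) * ((N : ℚ) * r.2) ^ 2
            = (k : ℚ) * ((Nat.gcd 2 N : ℚ) * N))
    (h3 : ∃ k : ℤ, ∑ᶠ r : ℚ × ℚ, (m r : ℚ) * ((N : ℚ) * r.1) * ((N : ℚ) * r.2)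
            = (k : ℚ) * N)
    (h4 : (12 : ℤ) ∣ (∑ᶠ r : ℚ × ℚ, m r) * (Nat.gcd 12 N : ℤ)) :
    ∃ s1 s2 : ℚ × ℚ → ℤ, ∃ k1 k2 k3 : ℤ,
      (∀ r ∈ hfin.toFinset, r.1 = (s1 r : ℚ) / N ∧ r.2 = (s2 r : ℚ) / N) ∧
      ∑ r ∈ hfin.toFinset, m r * s1 r ^ 2 = k1 * (Nat.gcd 2 N * N) ∧
      ∑ r ∈ hfin.toFinset, m r * s2 r ^ 2 = k2 * (Nat.gcd 2 N * N) ∧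
      ∑ r ∈ hfin.toFinset, m r * s1 r * s2 r = k3 * N ∧
      (12 : ℤ) ∣ (∑ r ∈ hfin.toFinset, m r) * (Nat.gcd 12 N : ℤ) := by
  have hN0 : (N : ℚ) ≠ 0 := by positivity
  obtain ⟨k1, h1⟩ := h1
  obtain ⟨k2, h2⟩ := h2
  obtain ⟨k3, h3⟩ := h3
  have hs : ∀ r ∈ hfin.toFinset, r.1 = (⌊(N : ℚ) * r.1⌋ : ℚ) / N ∧ r.2 = (⌊(N : ℚ) * r.2⌋ : ℚ) / N := by
    intro r hr
    obtain ⟨⟨a, b, hab⟩, -⟩ := hmem r (by simpa using hr)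
    rw [hab]
    simp only
    rw [mul_div_cancel₀ _ hN0, mul_div_cancel₀ _ hN0, Int.floor_intCast, Int.floor_intCast]
    exact ⟨rfl, rfl⟩
  have hs1 : ∀ r ∈ hfin.toFinset, (N : ℚ) * r.1 = (⌊(N : ℚ) * r.1⌋ : ℚ) := fun r hr => by
    have := (hs r hr).1
    field_simp at this
    rwa [mul_comm]
  have hs2 : ∀ r ∈ hfin.toFinset, (N : ℚ) * r.2 = (⌊(N : ℚ) * r.2⌋ : ℚ) := fun r hr => by
    have := (hs r hr).2
    field_simp at this
    rwa [mul_comm]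
  refine ⟨fun r => ⌊(N : ℚ) * r.1⌋, fun r => ⌊(N : ℚ) * r.2⌋, k1, k2, k3, hs, ?_, ?_, ?_, ?_⟩
  · rw [finsum_eq_sum_of_support_subset (s := hfin.toFinset)] at h1
    · rw [Finset.sum_congr rfl (fun r hr => by rw [hs1 r hr])] at h1
      exact_mod_cast h1
    · intro r hr
      have : m r ≠ 0 := by intro h; simp [h] at hr
      simpa using this
  · rw [finsum_eq_sum_of_support_subset (s := hfin.toFinset)] at h2
    · rw [Finset.sum_congr rfl (fun r hr => by rw [hs2 r hr])] at h2
      exact_mod_cast h2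
    · intro r hr
      have : m r ≠ 0 := by intro h; simp [h] at hr
      simpa using this
  · rw [finsum_eq_sum_of_support_subset (s := hfin.toFinset)] at h3
    · rw [Finset.sum_congr rfl (fun r hr => by rw [hs2 r hr, hs1 r hr])] at h3
      exact_mod_cast h3
    · intro r hr
      have : m r ≠ 0 := by intro h; simp [h] at hr
      simpa using this
  · rwa [finsum_eq_sum_of_support_subset (s := hfin.toFinset)] at h4
    simp

lemma siegelProd_eq (m : ℚ × ℚ → ℤ) (hfin : (Function.support m).Finite) (τ : ℍ) :
    siegelProd m τ = ∏ r ∈ hfin.toFinset,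
      (Complex.exp ((Real.pi : ℂ) * Complex.I * (r.2 : ℂ) * (1 - (r.1 : ℂ))) * siegel r τ) ^ m r := by
  unfold siegelProd zetaFactor
  rw [finprod_eq_prod_of_mulSupport_subset (s := hfin.toFinset),
    finprod_eq_prod_of_mulSupport_subset (s := hfin.toFinset), ← Finset.prod_mul_distrib]
  · refine Finset.prod_congr rfl fun r _ => ?_
    rw [mul_zpow, ← Complex.exp_int_mul]
    congr 2; ring
  · intro r hr
    have : m r ≠ 0 := by intro h; simp [h] at hr
    simpa using this
  · intro r hr
    have : m r ≠ 0 := by intro h; simp [h] at hr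
    simpa using this

lemma ex_sum {ι : Type*} (S : Finset ι) (f : ι → ℂ) : ex (∑ r ∈ S, f r) = ∏ r ∈ S, ex (f r) := by
  unfold ex; rw [Finset.mul_sum, Complex.exp_sum]

theorem part_inv (N : ℕ) (hN : 1 < N) (m : ℚ × ℚ → ℤ)
    (hfin : (Function.support m).Finite) (s1 s2 : ℚ × ℚ → ℤ) (k1 k2 k3 : ℤ)
    (hs : ∀ r ∈ hfin.toFinset, r.1 = (s1 r : ℚ) / N ∧ r.2 = (s2 r : ℚ) / N)
    (h1 : ∑ r ∈ hfin.toFinset, m r * s1 r ^ 2 = k1 * (Nat.gcd 2 N * N))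
    (h2 : ∑ r ∈ hfin.toFinset, m r * s2 r ^ 2 = k2 * (Nat.gcd 2 N * N))
    (h3 : ∑ r ∈ hfin.toFinset, m r * s1 r * s2 r = k3 * N)
    (h4 : (12 : ℤ) ∣ (∑ r ∈ hfin.toFinset, m r) * (Nat.gcd 12 N : ℤ))
    (γ : SL(2, ℤ)) (hγ : γ ∈ CongruenceSubgroup.Gamma N) (τ : ℍ) :
    siegelProd m (γ • τ) = siegelProd m τ := by
  have hN0 : (N : ℂ) ≠ 0 := by
    have : N ≠ 0 := by omega
    exact_mod_cast this
  have hNq : (N : ℚ) ≠ 0 := by positivity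
  have hNz : (N : ℤ) ≠ 0 := by positivity
  obtain ⟨t2, ht2⟩ := psi_dvd N γ hγ _ h4
  have hdet := SL_det γ
  rw [CongruenceSubgroup.Gamma_mem] at hγ
  obtain ⟨g1, g2, g3, g4⟩ := hγ
  have q := fun x : ℤ => (ZMod.intCast_zmod_eq_zero_iff_dvd x N).1
  obtain ⟨a, ha⟩ := q (γ 0 0 - 1) (by push_cast; rw [g1]; simp)
  obtain ⟨b, hb⟩ := q (γ 0 1) g2
  obtain ⟨c, hc⟩ := q (γ 1 0) g3
  obtain ⟨d, hd⟩ := q (γ 1 1 - 1) (by push_cast; rw [g4]; simp)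
  have ha' : γ 0 0 = 1 + N * a := by linarith
  have hd' : γ 1 1 = 1 + N * d := by linarith
  have hD : a + d + N * (a * d - b * c) = 0 := by
    rw [ha', hd', hb, hc] at hdet
    have : (N : ℤ) * (a + d + N * (a * d - b * c)) = 0 := by linear_combination hdet
    exact (mul_eq_zero.1 this).resolve_left hNz
  obtain ⟨t, ht⟩ := sum_exponent hfin.toFinset m s1 s2 N a b c d k1 k2 k3 hD h1 h2 h3
  set f : ℚ × ℚ → ℤ := fun r => (N * ((a * s1 r + c * s2 r) * (b * s1 r + d * s2 r)
      + (a * s1 r + c * s2 r) + (b * s1 r + d * s2 r))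
      - (a * s1 r + c * s2 r) * s2 r + (b * s1 r + d * s2 r) * s1 r) with hf
  have key : ∀ r ∈ hfin.toFinset,
      siegel r (γ • τ) = ex ((psiZ γ : ℂ) / 12 + (f r : ℂ) / (2 * N)) * siegel r τ := by
    intro r hr
    obtain ⟨e1, e2⟩ := hs r hr
    have : tAct γ r = (r.1 + ((a * s1 r + c * s2 r : ℤ) : ℚ), r.2 + ((b * s1 r + d * s2 r : ℤ) : ℚ)) := by
      unfold tAct
      rw [ha', hd', hb, hc, e1, e2]
      push_cast
      ext <;> (simp only; field_simp; ring)
    rw [siegel_SL, this, siegel_shift, ← mul_assoc, ← ex_add]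
    congr 3
    rw [hf, e1, e2]
    push_cast
    field_simp
  rw [siegelProd_eq m hfin, siegelProd_eq m hfin]
  have : ∏ r ∈ hfin.toFinset, ex ((psiZ γ : ℂ) / 12 + (f r : ℂ) / (2 * N)) ^ m r = 1 := by
    simp only [ex_zpow]
    rw [← ex_sum, ex_eq_one_iff]
    refine ⟨t2 + t, ?_⟩
    have e1 : ∑ r ∈ hfin.toFinset, (m r : ℂ) * ((psiZ γ : ℂ) / 12 + (f r : ℂ) / (2 * N)) =
      (((∑ r ∈ hfin.toFinset, m r) * psiZ γ : ℤ) : ℂ) / 12 +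
      ((∑ r ∈ hfin.toFinset, m r * f r : ℤ) : ℂ) / (2 * N) := by
      push_cast
      rw [Finset.sum_mul, Finset.sum_div, Finset.sum_div, ← Finset.sum_add_distrib]
      refine Finset.sum_congr rfl fun r _ => ?_
      ring
    rw [e1, ht2, ht]
    push_cast
    field_simp
  rw [← one_mul (∏ r ∈ hfin.toFinset, (_ * siegel r τ) ^ m r), ← this, ← Finset.prod_mul_distrib]
  refine Finset.prod_congr rfl fun r hr => ?_
  rw [key r hr, ← mul_zpow]
  congr 1; ring

/-- Holomorphic functions on the unit disc all of whose Taylor coefficients lie in `K`. -/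
def GoodF (K : IntermediateField ℚ ℂ) (F : ℂ → ℂ) : Prop :=
  DifferentiableOn ℂ F (Metric.ball 0 1) ∧ ∀ n, iteratedDeriv n F 0 ∈ K

lemma contDiffAt_zero_of {F : ℂ → ℂ} (h : DifferentiableOn ℂ F (Metric.ball 0 1)) (n : ℕ) :
    ContDiffAt ℂ n F 0 :=
  (h.analyticAt (Metric.ball_mem_nhds 0 one_pos)).contDiffAt

lemma GoodF.congr {K : IntermediateField ℚ ℂ} {F G : ℂ → ℂ} (hF : GoodF K F)
    (h : ∀ x ∈ Metric.ball (0 : ℂ) 1, G x = F x) : GoodF K G := by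
  refine ⟨hF.1.congr h, fun n => ?_⟩
  rw [Filter.EventuallyEq.iteratedDeriv_eq n (f := G) (g := F)]
  · exact hF.2 n
  · exact Filter.eventually_of_mem (Metric.ball_mem_nhds 0 one_pos) h

lemma GoodF.mul {K : IntermediateField ℚ ℂ} {F G : ℂ → ℂ} (hF : GoodF K F) (hG : GoodF K G) :
    GoodF K (fun x => F x * G x) := by
  refine ⟨hF.1.mul hG.1, fun n => ?_⟩
  rw [iteratedDeriv_fun_mul (contDiffAt_zero_of hF.1 n) (contDiffAt_zero_of hG.1 n)]
  exact sum_mem fun i _ => mul_mem (mul_mem (natCast_mem K _) (hF.2 _)) (hG.2 _)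

lemma GoodF.sub {K : IntermediateField ℚ ℂ} {F G : ℂ → ℂ} (hF : GoodF K F) (hG : GoodF K G) :
    GoodF K (fun x => F x - G x) := by
  refine ⟨hF.1.sub hG.1, fun n => ?_⟩
  rw [iteratedDeriv_fun_sub (contDiffAt_zero_of hF.1 n) (contDiffAt_zero_of hG.1 n)]
  exact sub_mem (hF.2 _) (hG.2 _)

lemma GoodF.const {K : IntermediateField ℚ ℂ} {c : ℂ} (hc : c ∈ K) : GoodF K (fun _ => c) := by
  refine ⟨differentiableOn_const c, fun n => ?_⟩
  rw [iteratedDeriv_const]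
  split_ifs
  · exact hc
  · exact zero_mem K

lemma GoodF.monomial (K : IntermediateField ℚ ℂ) (k : ℕ) : GoodF K (fun x => x ^ k) := by
  refine ⟨by fun_prop, fun n => ?_⟩
  rw [iteratedDeriv_fun_pow_zero]
  exact natCast_mem K _

lemma GoodF.inv {K : IntermediateField ℚ ℂ} {F : ℂ → ℂ} (hF : GoodF K F)
    (h0 : ∀ x ∈ Metric.ball (0 : ℂ) 1, F x ≠ 0) : GoodF K (fun x => (F x)⁻¹) := by
  have hd : DifferentiableOn ℂ (fun x => (F x)⁻¹) (Metric.ball 0 1) := hF.1.inv h0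
  have hF0 : F 0 ≠ 0 := h0 0 (by simp)
  have hFK : F 0 ∈ K := by simpa using hF.2 0
  refine ⟨hd, fun n => ?_⟩
  induction n using Nat.strong_induction_on with
  | _ n ih =>
    have e := iteratedDeriv_fun_mul (contDiffAt_zero_of hF.1 n) (contDiffAt_zero_of hd n)
    have e1 : iteratedDeriv n (fun x => F x * (F x)⁻¹) 0 ∈ K :=
      (GoodF.congr (GoodF.const (one_mem K)) (fun x hx => mul_inv_cancel₀ (h0 x hx))).2 n
    rw [Finset.sum_range_succ'] at e
    simp only [Nat.choose_zero_right, Nat.cast_one, one_mul, iteratedDeriv_zero, Nat.sub_zero] at e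
    have e2 : ∑ i ∈ Finset.range n, ((n.choose (i + 1) : ℕ) : ℂ) * iteratedDeriv (i + 1) F 0 *
        iteratedDeriv (n - (i + 1)) (fun x => (F x)⁻¹) 0 ∈ K := by
      refine sum_mem fun i hi => mul_mem (mul_mem (natCast_mem K _) (hF.2 _)) (ih _ ?_)
      rw [Finset.mem_range] at hi; omega
    have e3 := sub_mem e1 e2
    rw [e, add_sub_cancel_left] at e3
    have e4 := mul_mem (inv_mem hFK) e3
    rwa [inv_mul_cancel_left₀ hF0] at e4

lemma GoodF.pow {K : IntermediateField ℚ ℂ} {F : ℂ → ℂ} (hF : GoodF K F) (k : ℕ) :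
    GoodF K (fun x => F x ^ k) := by
  induction k with
  | zero => simpa using GoodF.const (one_mem K)
  | succ k ih => simpa [pow_succ] using ih.mul hF

lemma GoodF.zpow {K : IntermediateField ℚ ℂ} {F : ℂ → ℂ} (hF : GoodF K F)
    (h0 : ∀ x ∈ Metric.ball (0 : ℂ) 1, F x ≠ 0) (k : ℤ) : GoodF K (fun x => F x ^ k) := by
  cases k with
  | ofNat k => simpa using hF.pow k
  | negSucc k =>
    simp only [zpow_negSucc]
    exact (hF.pow (k + 1)).inv fun x hx => pow_ne_zero _ (h0 x hx)

lemma GoodF.prod {K : IntermediateField ℚ ℂ} {ι : Type*} (S : Finset ι) (F : ι → ℂ → ℂ)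
    (hF : ∀ i ∈ S, GoodF K (F i)) : GoodF K (fun x => ∏ i ∈ S, F i x) := by
  classical
  induction S using Finset.induction_on with
  | empty => simpa using GoodF.const (one_mem K)
  | insert a S ha ih =>
    simp only [Finset.prod_insert ha]
    exact (hF a (by simp)).mul (ih fun i hi => hF i (by simp [hi]))

lemma tendsto_iteratedDeriv {F : ℕ → ℂ → ℂ} {f : ℂ → ℂ} {U : Set ℂ} (hU : IsOpen U)
    (h : TendstoLocallyUniformlyOn F f Filter.atTop U) (hF : ∀ n, DifferentiableOn ℂ (F n) U)
    (k : ℕ) :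
    TendstoLocallyUniformlyOn (fun n => iteratedDeriv k (F n)) (iteratedDeriv k f) Filter.atTop U ∧
    ∀ n, DifferentiableOn ℂ (iteratedDeriv k (F n)) U := by
  induction k with
  | zero => simpa [iteratedDeriv_zero] using ⟨h, hF⟩
  | succ k ih =>
    simp only [iteratedDeriv_succ]
    exact ⟨ih.1.deriv (.of_forall ih.2) hU, fun n => (ih.2 n).deriv hU⟩

lemma prod_norm_le {α x : ℂ} (hα : ‖α‖ ≤ 1) {R : ℝ} (hx : ‖x‖ ≤ R) (hR : R < 1)
    {n e : ℕ} (he : n + 1 ≤ e) : ‖-(α * x ^ e)‖ ≤ R ^ (n + 1) := by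
  rw [norm_neg, norm_mul, norm_pow]
  have h0 : 0 ≤ R := (norm_nonneg x).trans hx
  calc ‖α‖ * ‖x‖ ^ e ≤ 1 * R ^ e := by gcongr
    _ ≤ R ^ (n + 1) := by rw [one_mul]; exact pow_le_pow_of_le_one h0 hR.le he

lemma GoodF.tprod {K : IntermediateField ℚ ℂ} {α : ℂ} (hK : α ∈ K) (hα : ‖α‖ ≤ 1) (e : ℕ → ℕ)
    (he : ∀ n, n + 1 ≤ e n) : GoodF K (fun x => ∏' n : ℕ, (1 - α * x ^ e n)) := by
  have hl : HasProdLocallyUniformlyOn (fun (n : ℕ) (x : ℂ) => 1 + -(α * x ^ e n))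
      (fun x => ∏' n : ℕ, (1 + -(α * x ^ e n))) (Metric.ball 0 1) := by
    apply hasProdLocallyUniformlyOn_of_forall_compact Metric.isOpen_ball
    intro Q hQ hcQ
    rcases Q.eq_empty_or_nonempty with hN | hN
    · simpa [hasProdUniformlyOn_iff_tendstoUniformlyOn, hN] using tendstoUniformlyOn_empty
    · obtain ⟨q₀, hq₀, _, HB⟩ := hcQ.exists_sSup_image_eq_and_ge hN
        (show ContinuousOn (fun q : ℂ ↦ ‖q‖) Q by fun_prop)
      have hq1 : ‖q₀‖ < 1 := by simpa [Metric.mem_ball, dist_zero_right] using hQ hq₀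
      refine ((summable_nat_add_iff 1).mpr
        (summable_geometric_of_lt_one (norm_nonneg _) hq1)).hasProdUniformlyOn_nat_one_add
        hcQ (.of_forall fun n x hx ↦ ?_) (fun _ ↦ by fun_prop)
      exact prod_norm_le hα (HB x hx) hq1 (he n)
  simp only [← sub_eq_add_neg] at hl
  have ht := hl.tendstoLocallyUniformlyOn_finsetRange
  have hP : ∀ n, GoodF K (fun x => ∏ i ∈ Finset.range n, (1 - α * x ^ e i)) := fun n =>
    GoodF.prod _ _ fun i _ =>
      (GoodF.const (one_mem K)).sub ((GoodF.const hK).mul (GoodF.monomial K (e i)))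
  refine ⟨ht.differentiableOn (.of_forall fun n => (hP n).1) Metric.isOpen_ball, fun k => ?_⟩
  have hlim := ((tendsto_iteratedDeriv Metric.isOpen_ball ht (fun n => (hP n).1) k).1).tendsto_at
    (Metric.mem_ball_self one_pos)
  have hstep : ∀ n, k ≤ n →
      iteratedDeriv k (fun x => ∏ i ∈ Finset.range (n + 1), (1 - α * x ^ e i)) 0 =
      iteratedDeriv k (fun x => ∏ i ∈ Finset.range n, (1 - α * x ^ e i)) 0 := by
    intro n hn
    have hg : GoodF K (fun x => α * (∏ i ∈ Finset.range n, (1 - α * x ^ e i))) :=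
      (GoodF.const hK).mul (hP n)
    have : (fun x : ℂ => ∏ i ∈ Finset.range (n + 1), (1 - α * x ^ e i)) = fun x =>
        (∏ i ∈ Finset.range n, (1 - α * x ^ e i)) -
          x ^ e n * (α * ∏ i ∈ Finset.range n, (1 - α * x ^ e i)) := by
      funext x; rw [Finset.prod_range_succ]; ring
    rw [this, iteratedDeriv_fun_sub (contDiffAt_zero_of (hP n).1 k)
      (contDiffAt_zero_of ((GoodF.monomial K (e n)).mul hg).1 k),
      iteratedDeriv_fun_mul (contDiffAt_zero_of (GoodF.monomial K (e n)).1 k)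
        (contDiffAt_zero_of hg.1 k), Finset.sum_eq_zero, sub_zero]
    intro i hi
    rw [Finset.mem_range] at hi
    have := he n
    rw [iteratedDeriv_fun_pow_zero, if_neg (by omega)]
    simp
  have hconst : ∀ n, k ≤ n →
      iteratedDeriv k (fun x => ∏ i ∈ Finset.range n, (1 - α * x ^ e i)) 0 =
      iteratedDeriv k (fun x => ∏ i ∈ Finset.range k, (1 - α * x ^ e i)) 0 := by
    intro n hn
    induction n, hn using Nat.le_induction with
    | base => rfl
    | succ n hn ih => rw [hstep n hn, ih]
  have hlim2 : Filter.Tendsto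
      (fun n => iteratedDeriv k (fun x => ∏ i ∈ Finset.range n, (1 - α * x ^ e i)) 0)
      Filter.atTop (nhds (iteratedDeriv k (fun x => ∏ i ∈ Finset.range k, (1 - α * x ^ e i)) 0)) := by
    refine Filter.Tendsto.congr' ?_ tendsto_const_nhds
    filter_upwards [Filter.eventually_ge_atTop k] with n hn using (hconst n hn).symm
  rw [tendsto_nhds_unique hlim hlim2]
  exact (hP k).2 k

lemma tprod_ne {α : ℂ} (hα : ‖α‖ ≤ 1) (e : ℕ → ℕ) (he : ∀ n, n + 1 ≤ e n) (x : ℂ)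
    (hx : x ∈ Metric.ball (0 : ℂ) 1) : ∏' n : ℕ, (1 - α * x ^ e n) ≠ 0 := by
  have hx1 : ‖x‖ < 1 := by simpa using hx
  have := tprod_one_add_ne_zero_of_summable (f := fun n : ℕ => -(α * x ^ e n)) ?_ ?_
  · simpa [sub_eq_add_neg] using this
  · intro n h
    have h1 : ‖-(α * x ^ e n)‖ ≤ ‖x‖ ^ (n + 1) := prod_norm_le hα le_rfl hx1 (he n)
    have h2 : ‖x‖ ^ (n + 1) < 1 := pow_lt_one₀ (norm_nonneg _) hx1 (by omega)
    have h3 : -(α * x ^ e n) = -1 := by linear_combination h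
    rw [h3] at h1
    simp at h1
    linarith
  · exact Summable.of_nonneg_of_le (fun _ => norm_nonneg _)
      (fun n => prod_norm_le hα le_rfl hx1 (he n))
      ((summable_nat_add_iff 1).mpr (summable_geometric_of_lt_one (norm_nonneg _) hx1))

lemma tprod_mult {α : ℂ} (hα : ‖α‖ ≤ 1) (e : ℕ → ℕ) (he : ∀ n, n + 1 ≤ e n) (x : ℂ)
    (hx1 : ‖x‖ < 1) : Multipliable (fun n : ℕ => (1 - α * x ^ e n)) := by
  have : Summable (fun n : ℕ => ‖-(α * x ^ e n)‖) :=
    Summable.of_nonneg_of_le (fun _ => norm_nonneg _)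
      (fun n => prod_norm_le hα le_rfl hx1 (he n))
      ((summable_nat_add_iff 1).mpr (summable_geometric_of_lt_one (norm_nonneg _) hx1))
  simpa [sub_eq_add_neg] using multipliable_one_add_of_summable this

/-- The cyclotomic field. -/
abbrev cycK (N : ℕ) : IntermediateField ℚ ℂ :=
  IntermediateField.adjoin ℚ ({Complex.exp (2 * (Real.pi : ℂ) * Complex.I / N)} : Set ℂ)

lemma ex_mem (N : ℕ) (b : ℤ) : ex ((b : ℂ) / N) ∈ cycK N := by
  have h : Complex.exp (2 * (Real.pi : ℂ) * Complex.I / N) ∈ cycK N :=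
    IntermediateField.subset_adjoin ℚ _ (Set.mem_singleton _)
  have e : ex ((b : ℂ) / N) = Complex.exp (2 * (Real.pi : ℂ) * Complex.I / N) ^ b := by
    rw [ex, ← Complex.exp_int_mul]; congr 1; ring
  rw [e]
  exact zpow_mem h b

lemma ex_norm (N : ℕ) (hN : N ≠ 0) (b : ℤ) : ‖ex ((b : ℂ) / N)‖ = 1 := by
  have hN0 : (N : ℂ) ≠ 0 := by exact_mod_cast hN
  refine norm_eq_one_of_pow_eq_one (n := N) ?_ hN
  rw [ex_pow, mul_div_cancel₀ _ hN0, ex_int]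

/-- The basic power series factor. -/
def serF (N : ℕ) (a : ℕ) (b : ℤ) (x : ℂ) : ℂ :=
  -(1 - ex ((b : ℂ) / N) * x ^ a) * (∏' n : ℕ, (1 - ex ((b : ℂ) / N) * x ^ ((n + 1) * N + a))) *
    ∏' n : ℕ, (1 - ex (((-b : ℤ) : ℂ) / N) * x ^ ((n + 1) * N - a))

lemma exp_bounds {N a : ℕ} (ha : a < N) (n : ℕ) :
    n + 1 ≤ (n + 1) * N + a ∧ n + 1 ≤ (n + 1) * N - a := by
  have h1 : 1 ≤ N := by omega
  constructor
  · nlinarith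
  · have : n * 1 ≤ n * N := Nat.mul_le_mul_left n h1
    have e : (n + 1) * N = n * N + N := by ring
    omega

lemma serF_good (N a : ℕ) (b : ℤ) (ha : a < N) : GoodF (cycK N) (serF N a b) := by
  have h1 := (ex_norm N (by omega) b).le
  have h2 := (ex_norm N (by omega) (-b)).le
  have g1 := GoodF.tprod (ex_mem N b) h1 (fun n => (n + 1) * N + a) (fun n => (exp_bounds ha n).1)
  have g2 := GoodF.tprod (ex_mem N (-b)) h2 (fun n => (n + 1) * N - a)
    (fun n => (exp_bounds ha n).2)
  have g3 := (GoodF.const (neg_mem (one_mem (cycK N)))).mul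
    ((GoodF.const (one_mem _)).sub ((GoodF.const (ex_mem N b)).mul (GoodF.monomial _ a)))
  refine ((g3.mul g1).mul g2).congr fun x _ => ?_
  unfold serF; ring

lemma serF_ne (N a : ℕ) (b : ℤ) (ha : a < N) (hab : ¬ (a = 0 ∧ (N : ℤ) ∣ b))
    (x : ℂ) (hx : x ∈ Metric.ball (0 : ℂ) 1) : serF N a b x ≠ 0 := by
  have h1 := ex_norm N (by omega) b
  have h2 := (ex_norm N (by omega) (-b)).le
  have hN0 : (N : ℂ) ≠ 0 := by
    have : N ≠ 0 := by omega
    exact_mod_cast this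
  have hx1 : ‖x‖ < 1 := by simpa using hx
  refine mul_ne_zero (mul_ne_zero (neg_ne_zero.2 ?_) ?_) ?_
  · intro h
    rw [sub_eq_zero] at h
    by_cases ha0 : a = 0
    · rw [ha0, pow_zero, mul_one, eq_comm, ex_eq_one_iff] at h
      obtain ⟨n, hn⟩ := h
      refine hab ⟨ha0, n, ?_⟩
      field_simp at hn
      exact_mod_cast hn
    · have h3 := congrArg norm h
      rw [norm_mul, h1, norm_one, norm_pow, one_mul] at h3
      exact absurd h3.symm (pow_lt_one₀ (norm_nonneg _) hx1 ha0).ne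
  · exact tprod_ne h1.le _ (fun n => (exp_bounds ha n).1) x hx
  · exact tprod_ne h2 _ (fun n => (exp_bounds ha n).2) x hx

lemma siegel_base (N a : ℕ) (b : ℤ) (ha : a < N) (r : ℚ × ℚ) (h1 : r.1 = (a : ℚ) / N)
    (h2 : r.2 = (b : ℚ) / N) (τ : ℍ) :
    Complex.exp ((Real.pi : ℂ) * Complex.I * (r.2 : ℂ) * (1 - (r.1 : ℂ))) * siegel r τ =
      ex (((r.1 : ℂ) ^ 2 - r.1 + 1 / 6) / 2 * τ) * serF N a b (ex (τ / N)) := by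
  have hN0 : (N : ℂ) ≠ 0 := by
    have : N ≠ 0 := by omega
    exact_mod_cast this
  have hx1 : ‖ex ((τ : ℂ) / N)‖ < 1 := by
    apply norm_ex_lt
    have : ((τ : ℂ) / N).im = τ.im / N := by
      simp
    rw [this]
    exact div_pos τ.2 (by exact_mod_cast (by omega : 0 < N))
  have c1 : (r.1 : ℂ) = a / N := by rw [h1]; push_cast; rfl
  have c2 : (r.2 : ℂ) = b / N := by rw [h2]; push_cast; rfl
  have m1 := tprod_mult (ex_norm N (by omega) b).le (fun n => (n + 1) * N + a)
    (fun n => (exp_bounds ha n).1) _ hx1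
  have m2 := tprod_mult (ex_norm N (by omega) (-b)).le (fun n => (n + 1) * N - a)
    (fun n => (exp_bounds ha n).2) _ hx1
  unfold siegel serF
  rw [mul_assoc (-(1 - _)), ← m1.tprod_mul m2]
  have hp : ∀ n : ℕ, ((1 - Complex.exp (2 * (Real.pi : ℂ) * Complex.I *
          (((n : ℂ) + 1 + (r.1 : ℂ)) * τ + (r.2 : ℂ)))) *
       (1 - Complex.exp (2 * (Real.pi : ℂ) * Complex.I *
          (((n : ℂ) + 1 - (r.1 : ℂ)) * τ - (r.2 : ℂ))))) =
      (1 - ex ((b : ℂ) / N) * ex (τ / N) ^ ((n + 1) * N + a)) *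
        (1 - ex (((-b : ℤ) : ℂ) / N) * ex (τ / N) ^ ((n + 1) * N - a)) := by
    intro n
    have hle : a ≤ (n + 1) * N := by nlinarith
    rw [ex_pow, ex_pow, ← ex_add, ← ex_add, Nat.cast_sub hle, c1, c2]
    unfold ex
    congr 4
    · push_cast; field_simp; ring
    · push_cast; field_simp; ring
  rw [tprod_congr hp]
  have e1 : Complex.exp (2 * (Real.pi : ℂ) * Complex.I * ((r.1 : ℂ) * τ + (r.2 : ℂ))) =
      ex ((b : ℂ) / N) * ex (τ / N) ^ a := by
    rw [ex_pow, ← ex_add, ex, c1, c2]; congr 1; ring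
  have e2 : Complex.exp ((Real.pi : ℂ) * Complex.I * (((r.1 : ℂ) ^ 2 - (r.1 : ℂ) + 1 / 6) * τ)) =
      ex (((r.1 : ℂ) ^ 2 - r.1 + 1 / 6) / 2 * τ) := by
    rw [ex]; congr 1; ring
  have e3 : Complex.exp ((Real.pi : ℂ) * Complex.I * (r.2 : ℂ) * (1 - (r.1 : ℂ))) *
      Complex.exp ((Real.pi : ℂ) * Complex.I * (r.2 : ℂ) * ((r.1 : ℂ) - 1)) = 1 := by
    rw [← Complex.exp_add, ← Complex.exp_zero]; congr 1; ring
  rw [e1, e2]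
  set P := ∏' n : ℕ, ((1 - ex ((b : ℂ) / N) * ex (τ / N) ^ ((n + 1) * N + a)) *
        (1 - ex (((-b : ℤ) : ℂ) / N) * ex (τ / N) ^ ((n + 1) * N - a)))
  linear_combination (-ex (((r.1 : ℂ) ^ 2 - r.1 + 1 / 6) / 2 * τ) *
    (1 - ex ((b : ℂ) / N) * ex (τ / N) ^ a) * P) * e3

lemma siegel_good (N : ℕ) (hN : 1 < N) (s1 s2 : ℤ) (r : ℚ × ℚ) (h1 : r.1 = (s1 : ℚ) / N)
    (h2 : r.2 = (s2 : ℚ) / N) (hr : NonIntegral r) :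
    ∃ k : ℤ, ∃ F : ℂ → ℂ, GoodF (cycK N) F ∧ (∀ x ∈ Metric.ball (0 : ℂ) 1, F x ≠ 0) ∧
      ∀ τ : ℍ, Complex.exp ((Real.pi : ℂ) * Complex.I * (r.2 : ℂ) * (1 - (r.1 : ℂ))) * siegel r τ =
      ex (((r.1 : ℂ) ^ 2 - r.1 + 1 / 6) / 2 * τ) * ex (τ / N) ^ k * F (ex (τ / N)) := by
  have hNq : (N : ℚ) ≠ 0 := by positivity
  have hN0 : (N : ℂ) ≠ 0 := by
    have : N ≠ 0 := by omega
    exact_mod_cast this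
  obtain ⟨a, ha⟩ : ∃ a : ℕ, s1 % N = a := ⟨(s1 % N).toNat, (Int.toNat_of_nonneg
    (Int.emod_nonneg _ (by omega))).symm⟩
  have haN : a < N := by
    have := Int.emod_lt_of_pos s1 (by omega : (0 : ℤ) < N)
    omega
  set k := s1 / N with hk
  have hs : s1 = a + N * k := by rw [← ha, hk]; exact (Int.emod_add_mul_ediv s1 N).symm
  have hr1 : r.1 = (a : ℚ) / N + k := by
    rw [h1, hs]; push_cast; field_simp
  obtain ⟨t, ht⟩ : (2 : ℤ) ∣ k ^ 2 - k := even_sq_sub k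
  have hab : ¬ (a = 0 ∧ (N : ℤ) ∣ s2) := by
    rintro ⟨h, l, hl⟩
    refine hr ⟨k, l, Prod.ext ?_ ?_⟩
    · rw [hr1, h]; simp
    · rw [h2, hl]; push_cast; field_simp
  refine ⟨-(a * k) - N * t, fun x => (-1) ^ k * ex (((-(k * s2) : ℤ) : ℂ) / N) * serF N a s2 x,
    ?_, ?_, ?_⟩
  · exact (GoodF.const (mul_mem (zpow_mem (neg_mem (one_mem _)) k) (ex_mem N _))).mul
      (serF_good N a s2 haN)
  · intro x hx
    exact mul_ne_zero (mul_ne_zero (zpow_ne_zero _ (by norm_num)) (ex_ne _))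
      (serF_ne N a s2 haN hab x hx)
  · intro τ
    set r0 : ℚ × ℚ := ((a : ℚ) / N, r.2) with hr0
    have hb := siegel_base N a s2 haN r0 rfl h2 τ
    have hsh := siegel_shift r0 k 0 τ
    have : ((r0.1 + k : ℚ), r0.2 + ((0 : ℤ) : ℚ)) = r := by
      apply Prod.ext
      · rw [hr1]
      · simp [hr0]
    rw [this] at hsh
    rw [hsh]
    have c1 : (r0.1 : ℂ) = a / N := by rw [hr0]; push_cast; rfl
    have c0 : (r.1 : ℂ) = (r0.1 : ℂ) + k := by rw [c1, hr1]; push_cast; rfl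
    have c2 : (r0.2 : ℂ) = r.2 := by rw [hr0]
    have c3 : (r.2 : ℂ) = s2 / N := by rw [h2]; push_cast; rfl
    have htc : (k : ℂ) ^ 2 - k = 2 * t := by exact_mod_cast ht
    have e1 : Complex.exp ((Real.pi : ℂ) * Complex.I * (r.2 : ℂ) * (1 - (r.1 : ℂ))) *
        ex ((k * ((0 : ℤ) : ℂ) + k + ((0 : ℤ) : ℂ) - k * r0.2 + ((0 : ℤ) : ℂ) * r0.1) / 2) =
        Complex.exp ((Real.pi : ℂ) * Complex.I * (r0.2 : ℂ) * (1 - (r0.1 : ℂ))) *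
        ((-1) ^ k * ex (((-(k * s2) : ℤ) : ℂ) / N)) := by
      rw [← ex_half, ex_zpow, ← ex_add]
      unfold ex
      rw [← Complex.exp_add, ← Complex.exp_add]
      congr 1
      push_cast
      rw [c2, c3, c0, c1]
      field_simp
      ring
    have e2 : ex (((r0.1 : ℂ) ^ 2 - r0.1 + 1 / 6) / 2 * τ) =
        ex (((r.1 : ℂ) ^ 2 - r.1 + 1 / 6) / 2 * τ) * ex (τ / N) ^ (-(a * k) - N * t) := by
      rw [ex_zpow, ← ex_add]
      congr 1
      push_cast
      have : (t : ℂ) = ((k : ℂ) ^ 2 - k) / 2 := by rw [htc]; ring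
      rw [this, c0, c1]
      field_simp
      ring
    rw [← e2]
    rw [← mul_assoc, e1]
    linear_combination ((-1) ^ k * ex (((-(k * s2) : ℤ) : ℂ) / N)) * hb

theorem part_exp (N : ℕ) (hN : 1 < N) (m : ℚ × ℚ → ℤ)
    (hmem : ∀ r : ℚ × ℚ, m r ≠ 0 → InDen N r ∧ NonIntegral r)
    (hfin : (Function.support m).Finite) (s1 s2 : ℚ × ℚ → ℤ) (k1 : ℤ)
    (hs : ∀ r ∈ hfin.toFinset, r.1 = (s1 r : ℚ) / N ∧ r.2 = (s2 r : ℚ) / N)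
    (h1 : ∑ r ∈ hfin.toFinset, m r * s1 r ^ 2 = k1 * (Nat.gcd 2 N * N))
    (h4 : (12 : ℤ) ∣ (∑ r ∈ hfin.toFinset, m r) * (Nat.gcd 12 N : ℤ)) :
    ∃ n₀ : ℤ, ∃ c : ℕ → ℂ, (∀ n : ℕ, c n ∈ cycK N) ∧
      ∀ τ : ℍ, HasSum (fun n : ℕ => c n * qpow N (n₀ + n) τ) (siegelProd m τ) := by
  have hN0 : (N : ℂ) ≠ 0 := by
    have : N ≠ 0 := by omega
    exact_mod_cast this
  have H : ∀ r : ℚ × ℚ, ∃ k : ℤ, ∃ F : ℂ → ℂ, r ∈ hfin.toFinset →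
      GoodF (cycK N) F ∧ (∀ x ∈ Metric.ball (0 : ℂ) 1, F x ≠ 0) ∧
      ∀ τ : ℍ, Complex.exp ((Real.pi : ℂ) * Complex.I * (r.2 : ℂ) * (1 - (r.1 : ℂ))) * siegel r τ =
      ex (((r.1 : ℂ) ^ 2 - r.1 + 1 / 6) / 2 * τ) * ex (τ / N) ^ k * F (ex (τ / N)) := by
    intro r
    by_cases hr : r ∈ hfin.toFinset
    · obtain ⟨k, F, h⟩ := siegel_good N hN (s1 r) (s2 r) r (hs r hr).1 (hs r hr).2
        (hmem r (by simpa using hr)).2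
      exact ⟨k, F, fun _ => h⟩
    · exact ⟨0, fun _ => 0, fun h => absurd h hr⟩
  choose k F hF using H
  set S := hfin.toFinset with hS
  have p1 : (2 : ℤ) ∣ k1 * (Nat.gcd 2 N * N) - ∑ r ∈ S, m r * s1 r := by
    rw [← h1, ← Finset.sum_sub_distrib]
    refine Finset.dvd_sum fun r _ => ?_
    rw [← mul_sub]; exact Dvd.dvd.mul_left (even_sq_sub _) _
  have p2 : (2 : ℤ) ∣ k1 * Nat.gcd 2 N - ∑ r ∈ S, m r * s1 r := by
    have t := fun x : ℤ => ZMod.intCast_zmod_eq_zero_iff_dvd x 2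
    push_cast at t
    rw [← t] at p1 ⊢
    push_cast [gcd_mul_self] at p1 ⊢
    rwa [gcd_two_cast]
  obtain ⟨u, hu⟩ := p2
  obtain ⟨v, hv⟩ : (12 : ℤ) ∣ (∑ r ∈ S, m r) * N :=
    h4.trans (mul_dvd_mul_left _ (Int.natCast_dvd_natCast.2 (Nat.gcd_dvd_right 12 N)))
  have hexp : ∑ r ∈ S, (m r : ℂ) * (((r.1 : ℂ) ^ 2 - r.1 + 1 / 6) / 2) = ((u + v : ℤ) : ℂ) / N := by
    have e : ∑ r ∈ S, (m r : ℂ) * (((r.1 : ℂ) ^ 2 - r.1 + 1 / 6) / 2) =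
      ((∑ r ∈ S, m r * s1 r ^ 2 : ℤ) : ℂ) / (2 * N ^ 2) - ((∑ r ∈ S, m r * s1 r : ℤ) : ℂ) / (2 * N)
        + ((∑ r ∈ S, m r : ℤ) : ℂ) / 12 := by
      push_cast
      rw [Finset.sum_div, Finset.sum_div, Finset.sum_div, ← Finset.sum_sub_distrib,
        ← Finset.sum_add_distrib]
      refine Finset.sum_congr rfl fun r hr => ?_
      have : (r.1 : ℂ) = s1 r / N := by rw [(hs r hr).1]; push_cast; rfl
      rw [this]
      field_simp
      ring
    have hu' : (k1 : ℂ) * (Nat.gcd 2 N : ℕ) - ((∑ r ∈ S, m r * s1 r : ℤ) : ℂ) = 2 * u := by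
      exact_mod_cast hu
    have hv' : ((∑ r ∈ S, m r : ℤ) : ℂ) * N = 12 * v := by exact_mod_cast hv
    have h1' : ((∑ r ∈ S, m r * s1 r ^ 2 : ℤ) : ℂ) = k1 * ((Nat.gcd 2 N : ℕ) * N) := by
      rw [h1]; push_cast; rfl
    rw [e, h1', eq_div_iff hN0]
    set A := ((∑ r ∈ S, m r * s1 r : ℤ) : ℂ)
    set B := ((∑ r ∈ S, m r : ℤ) : ℂ)
    push_cast
    have : ((k1 : ℂ) * ((Nat.gcd 2 N : ℕ) * N) / (2 * N ^ 2) - A / (2 * N) + B / 12) * N =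
      (k1 * (Nat.gcd 2 N : ℕ) - A) / 2 + B * N / 12 := by
      field_simp
    rw [this, hu', hv']; ring
  set G : ℂ → ℂ := fun x => ∏ r ∈ S, F r x ^ m r with hG
  have hGood : GoodF (cycK N) G := GoodF.prod S _ fun r hr =>
    (hF r hr).1.zpow (hF r hr).2.1 (m r)
  refine ⟨u + v + ∑ r ∈ S, m r * k r, fun n => ((n.factorial : ℕ) : ℂ)⁻¹ * iteratedDeriv n G 0,
    fun n => mul_mem (inv_mem (natCast_mem _ _)) (hGood.2 n), fun τ => ?_⟩
  have hx1 : ‖ex ((τ : ℂ) / N)‖ < 1 := by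
    apply norm_ex_lt
    have : ((τ : ℂ) / N).im = τ.im / N := by
      simp
    rw [this]
    exact div_pos τ.2 (by exact_mod_cast (by omega : 0 < N))
  have hval : siegelProd m τ = ex (τ / N) ^ (u + v + ∑ r ∈ S, m r * k r) * G (ex (τ / N)) := by
    rw [siegelProd_eq m hfin, ← hS]
    have : ∀ r ∈ S, (Complex.exp ((Real.pi : ℂ) * Complex.I * (r.2 : ℂ) * (1 - (r.1 : ℂ))) *
        siegel r τ) ^ m r = ex (((m r : ℂ) * (((r.1 : ℂ) ^ 2 - r.1 + 1 / 6) / 2)) * τ +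
          ((m r * k r : ℤ) : ℂ) * (τ / N)) * F r (ex (τ / N)) ^ m r := by
      intro r hr
      rw [(hF r hr).2.2 τ, mul_zpow]
      congr 1
      rw [ex_zpow, ← ex_add, ex_zpow]
      congr 1; push_cast; ring
    rw [Finset.prod_congr rfl this, Finset.prod_mul_distrib, ← ex_sum, Finset.sum_add_distrib,
      ← Finset.sum_mul, ← Finset.sum_mul, hexp, ex_zpow]
    congr 2
    push_cast
    ring
  have hT := Complex.hasSum_taylorSeries_on_ball hGood.1
    (show ex ((τ : ℂ) / N) ∈ Metric.ball (0 : ℂ) 1 by simpa using hx1)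
  have hT2 := hT.mul_left (ex ((τ : ℂ) / N) ^ (u + v + ∑ r ∈ S, m r * k r))
  rw [hval]
  refine hT2.congr_fun ?_
  intro n
  have hq : qpow N (u + v + ∑ r ∈ S, m r * k r + n) τ =
      ex (τ / N) ^ (u + v + ∑ r ∈ S, m r * k r) * ex (τ / N) ^ n := by
    rw [ex_zpow, ex_pow, ← ex_add, qpow, ex]
    congr 1; push_cast; ring
  rw [hq]
  simp only [smul_eq_mul, sub_zero]
  ring

/-- modularity criterion for products of Siegel functions. Under the
stated congruence conditions, `ζ ∏_r g_r^{m(r)}` is `Γ(N)`-invariant and its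
Fourier coefficients lie in `ℚ(ζ_N)`. -/
theorem statement8 (N : ℕ) (hN : 1 < N) (m : ℚ × ℚ → ℤ)
    (hmem : ∀ r : ℚ × ℚ, m r ≠ 0 → InDen N r ∧ NonIntegral r)
    (hfin : (Function.support m).Finite)
    (h1 : ∃ k : ℤ, ∑ᶠ r : ℚ × ℚ, (m r : ℚ) * ((N : ℚ) * r.1) ^ 2
            = (k : ℚ) * ((Nat.gcd 2 N : ℚ) * N))
    (h2 : ∃ k : ℤ, ∑ᶠ r : ℚ × ℚ, (m r : ℚ) * ((N : ℚ) * r.2) ^ 2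
            = (k : ℚ) * ((Nat.gcd 2 N : ℚ) * N))
    (h3 : ∃ k : ℤ, ∑ᶠ r : ℚ × ℚ, (m r : ℚ) * ((N : ℚ) * r.1) * ((N : ℚ) * r.2)
            = (k : ℚ) * N)
    (h4 : (12 : ℤ) ∣ (∑ᶠ r : ℚ × ℚ, m r) * (Nat.gcd 12 N : ℤ)) :
    (∀ γ ∈ CongruenceSubgroup.Gamma N, ∀ τ : ℍ, siegelProd m (γ • τ) = siegelProd m τ) ∧
    (∃ n₀ : ℤ, ∃ c : ℕ → ℂ,
      (∀ n : ℕ, c n ∈ IntermediateField.adjoin ℚ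
        ({Complex.exp (2 * (Real.pi : ℂ) * Complex.I / N)} : Set ℂ)) ∧
      ∀ τ : ℍ, HasSum (fun n : ℕ => c n * qpow N (n₀ + n) τ) (siegelProd m τ)) := by
  obtain ⟨s1, s2, k1, k2, k3, hs, e1, e2, e3, e4⟩ :=
    int_data N hN m hmem hfin h1 h2 h3 h4
  refine ⟨fun γ hγ τ => ?_, ?_⟩
  · exact part_inv N hN m hfin s1 s2 k1 k2 k3 hs e1 e2 e3 e4 γ hγ τ
  · exact part_exp N hN m hmem hfin s1 s2 k1 hs e1 e4
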